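/- arXiv:1612.08690 — 3 statements merged into one kernel-verified Lean document; each statement's English description precedes it below -/
import Mathlib

section
/- Suppose g ≥ 1 is odd and 0 ≤ j ≤ (g−1)/2. Then there exists a positive rational number c such that β₋^{j+(g−1)/2} β₊^{g−1} ζ_{g−2j−1} − c·γ^{g−1} lies in the ideal J_g of ℂ[α,β,γ]; that is, β₋^{j+(g−1)/2} β₊^{g−1} ζ_{g−2j−1} is equivalent modulo J_g to a positive rational multiple of γ^{g−1}. -/
open MvPolynomial

/-- ζ_k ∈ ℂ[α,β,γ] (variables: X 0 = α, X 1 = β, X 2 = γ). -/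
noncomputable def zeta : ℕ → MvPolynomial (Fin 3) ℂ
  | 0 => 1
  | 1 => X 0
  | 2 => X 0 * zeta 1 + (X 1 - C 8) * zeta 0
  | (n + 3) =>
      X 0 * zeta (n + 2)
        + C (((n : ℂ) + 2) ^ 2) * (X 1 + C ((-1) ^ (n + 2) * 8)) * zeta (n + 1)
        + C (2 * ((n : ℂ) + 2) * ((n : ℂ) + 1)) * X 2 * zeta n

/-- J_g = (ζ_g, ζ_{g+1}, ζ_{g+2}) ⊆ ℂ[α,β,γ]. -/
noncomputable def J (g : ℕ) : Ideal (MvPolynomial (Fin 3) ℂ) :=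
  Ideal.span {zeta g, zeta (g + 1), zeta (g + 2)}

/-- β₋ = β − 8. -/
noncomputable def betaM : MvPolynomial (Fin 3) ℂ := X 1 - C 8

/-- β₊ = β + 8. -/
noncomputable def betaP : MvPolynomial (Fin 3) ℂ := X 1 + C 8

/-!
The ideal `J 1` is the maximal ideal of the point `(α, β, γ) = (0, 8, 0)`, and multiplication by `γ`
maps `J g` into `J (g + 1)`. Hence `h * γ ^ d ≡ h(0, 8, 0) * γ ^ d` modulo `J (d + 1)` for every
polynomial `h`.

Write `bₖ = β + (-1) ^ k * 8` and `Bₙ = b₀ ⋯ bₙ₋₁`. Solving the recursion of `ζ` for `bₘ₊₁ * ζₘ`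
gives
`(m + 1)² * B₂ᵢ₊ₘ * ζₘ = B₂ᵢ₊ₘ₋₁ * (ζₘ₊₂ - α * ζₘ₊₁) + 2 * (m + 1) * m * (-γ) * B₂ᵢ₊ₘ₋₁ * ζₘ₋₁`,
because `b` only depends on the parity of its index. By induction on `i` and then on `m`, modulo
`J (i + m + 1)` the product `B₂ᵢ₊ₘ * ζₘ` is a nonnegative rational multiple of `(-γ) ^ (i + m)`:
the `α` term vanishes at the point, where `bₖ` takes one of the nonnegative values `16` and `0`.
For even `i` the multiple is positive, and the theorem is the case of even `i` and `m`, multiplied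
by a power of `β₊`, which takes the value `16` at the point.
-/

/-- The factor `β + (-1) ^ k * 8` of the recursion of `zeta`: it is `β₊` for even `k` and `β₋` for
odd `k`. -/
noncomputable def betaSign (k : ℕ) : MvPolynomial (Fin 3) ℂ := X 1 + C ((-1) ^ k * 8)

lemma betaSign_of_even {k : ℕ} (hk : Even k) : betaSign k = betaP := by
  simp [betaSign, betaP, hk.neg_one_pow]

lemma betaSign_of_odd {k : ℕ} (hk : Odd k) : betaSign k = betaM := by
  simp [betaSign, betaM, hk.neg_one_pow, sub_eq_add_neg]

lemma betaSign_two_mul_add (i m : ℕ) : betaSign (2 * i + m) = betaSign m := by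
  simp [betaSign, pow_add, pow_mul]

/-- The difference `ζₘ₊₂ - α * ζₘ₊₁`, which the recursion of `zeta` expresses through `ζₘ` and
`ζₘ₋₁`. -/
noncomputable def zetaDiff (m : ℕ) : MvPolynomial (Fin 3) ℂ := zeta (m + 2) - X 0 * zeta (m + 1)

lemma zetaDiff_zero : zetaDiff 0 = betaM := by
  simp [zetaDiff, zeta, betaM]

lemma zetaDiff_succ (m : ℕ) :
    zetaDiff (m + 1) = C (((m : ℂ) + 2) ^ 2) * betaSign m * zeta (m + 1)
      + C (2 * ((m : ℂ) + 2) * ((m : ℂ) + 1)) * X 2 * zeta m := by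
  rw [zetaDiff, zeta, betaSign, pow_add (-1 : ℂ), neg_one_sq, mul_one]
  ring

lemma zeta_mem_J (g : ℕ) : zeta g ∈ J g := Ideal.subset_span (by simp)

lemma zeta_add_one_mem_J (g : ℕ) : zeta (g + 1) ∈ J g := Ideal.subset_span (by simp)

lemma zeta_add_two_mem_J (g : ℕ) : zeta (g + 2) ∈ J g := Ideal.subset_span (by simp)

lemma zetaDiff_mem_J_succ (m : ℕ) : zetaDiff m ∈ J (m + 1) :=
  sub_mem (zeta_add_one_mem_J _) (Ideal.mul_mem_left _ _ (zeta_mem_J _))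

lemma gamma_mul_zeta_mem_J (g : ℕ) : X 2 * zeta g ∈ J (g + 1) := by
  have coeff_ne_zero : 2 * ((g : ℂ) + 2) * ((g : ℂ) + 1) ≠ 0 := by
    exact_mod_cast (by positivity : 2 * (g + 2) * (g + 1) ≠ 0)
  have zetaDiff_mem : zetaDiff (g + 1) ∈ J (g + 1) :=
    sub_mem (zeta_add_two_mem_J _) (Ideal.mul_mem_left _ _ (zeta_add_one_mem_J _))
  rw [zetaDiff_succ, Ideal.add_mem_iff_right _ (Ideal.mul_mem_left _ _ (zeta_mem_J _)),
    mul_assoc] at zetaDiff_mem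
  exact ((J (g + 1)).unit_mul_mem_iff_mem ((isUnit_iff_ne_zero.2 coeff_ne_zero).map C)).1
    zetaDiff_mem

lemma gamma_mul_mem_J {g : ℕ} {f : MvPolynomial (Fin 3) ℂ} (hf : f ∈ J g) :
    X 2 * f ∈ J (g + 1) := by
  suffices J g ≤ Submodule.comap (LinearMap.mulLeft (MvPolynomial (Fin 3) ℂ) (X 2)) (J (g + 1)) from
    this hf
  refine Ideal.span_le.2 ?_
  rintro _ (rfl | rfl | rfl)
  · exact gamma_mul_zeta_mem_J g
  · exact Ideal.mul_mem_left _ _ (zeta_mem_J _)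
  · exact Ideal.mul_mem_left _ _ (zeta_add_one_mem_J _)

lemma neg_gamma_pow_mul_mem_J {g : ℕ} {f : MvPolynomial (Fin 3) ℂ} (hf : f ∈ J g) (d : ℕ) :
    (-X 2) ^ d * f ∈ J (g + d) := by
  induction d with
  | zero => simpa using hf
  | succ d ih =>
    rw [pow_succ', mul_assoc, neg_mul]
    exact neg_mem (gamma_mul_mem_J ih)

lemma alpha_mem_J_one : X 0 ∈ J 1 := by
  simpa only [zeta] using zeta_mem_J 1

lemma betaM_mem_J_one : betaM ∈ J 1 :=
  zetaDiff_zero ▸ zetaDiff_mem_J_succ 0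

lemma betaSign_sub_C_mem_J_one (k : ℕ) :
    betaSign k - C ((8 + (-1) ^ k * 8 : ℚ) : ℂ) ∈ J 1 := by
  have sub_eq_betaM : betaSign k - C ((8 + (-1) ^ k * 8 : ℚ) : ℂ) = betaM := by
    simp [betaSign, betaM]
  exact sub_eq_betaM ▸ betaM_mem_J_one

/-- The alternating product `β₊ β₋ β₊ ⋯` with `n` factors. -/
noncomputable def betaProd (n : ℕ) : MvPolynomial (Fin 3) ℂ := ∏ k ∈ Finset.range n, betaSign k

lemma betaProd_succ (n : ℕ) : betaProd (n + 1) = betaProd n * betaSign n :=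
  Finset.prod_range_succ betaSign n

lemma betaProd_two_mul (n : ℕ) : betaProd (2 * n) = (betaM * betaP) ^ n := by
  induction n with
  | zero => simp [betaProd]
  | succ n ih =>
    rw [mul_add_one, betaProd_succ, betaProd_succ, ih, betaSign_of_even (even_two_mul n),
      betaSign_of_odd (odd_two_mul_add_one n)]
    ring

lemma betaProd_mul_zeta_zero (i : ℕ) :
    betaProd (2 * i + 2) * zeta 0 = betaProd (2 * i + 1) * zetaDiff 0 := by
  rw [betaProd_succ, betaSign_of_odd (odd_two_mul_add_one i), zetaDiff_zero, zeta, mul_one]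

lemma betaProd_mul_zeta_succ (i m : ℕ) :
    C (((m : ℂ) + 2) ^ 2) * (betaProd (2 * i + (m + 1)) * zeta (m + 1))
      = betaProd (2 * i + m) * zetaDiff (m + 1)
        + C (2 * ((m : ℂ) + 2) * ((m : ℂ) + 1)) * (-X 2 * (betaProd (2 * i + m) * zeta m)) := by
  rw [← add_assoc, betaProd_succ, betaSign_two_mul_add, zetaDiff_succ]
  ring

/-- The congruence `f ≡ c * (-γ) ^ d` modulo `J (d + 1)`. Using `-γ` instead of `γ` makes all
coefficients `c` of the induction nonnegative. -/
def CongrNegGammaPow (d : ℕ) (c : ℚ) (f : MvPolynomial (Fin 3) ℂ) : Prop :=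
  f - C (c : ℂ) * (-X 2) ^ d ∈ J (d + 1)

namespace CongrNegGammaPow

variable {d : ℕ} {a b c q : ℚ} {f f₁ f₂ h : MvPolynomial (Fin 3) ℂ}

lemma of_mem_J (hf : f ∈ J (d + 1)) : CongrNegGammaPow d 0 f := by
  simpa [CongrNegGammaPow] using hf

lemma add (h₁ : CongrNegGammaPow d a f₁) (h₂ : CongrNegGammaPow d b f₂) :
    CongrNegGammaPow d (a + b) (f₁ + f₂) := by
  have split : f₁ + f₂ - C ((a + b : ℚ) : ℂ) * (-X 2) ^ d
      = (f₁ - C (a : ℂ) * (-X 2) ^ d) + (f₂ - C (b : ℂ) * (-X 2) ^ d) := by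
    rw [Rat.cast_add, C_add]
    ring
  rw [CongrNegGammaPow, split]
  exact add_mem h₁ h₂

lemma mul_left (hh : h - C (q : ℂ) ∈ J 1) (hf : CongrNegGammaPow d c f) :
    CongrNegGammaPow d (q * c) (h * f) := by
  have split : h * f - C ((q * c : ℚ) : ℂ) * (-X 2) ^ d
      = h * (f - C (c : ℂ) * (-X 2) ^ d) + C (c : ℂ) * ((-X 2) ^ d * (h - C (q : ℂ))) := by
    rw [Rat.cast_mul, C_mul]
    ring
  have residue_mem : (-X 2) ^ d * (h - C (q : ℂ)) ∈ J (d + 1) :=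
    add_comm 1 d ▸ neg_gamma_pow_mul_mem_J hh d
  rw [CongrNegGammaPow, split]
  exact add_mem (Ideal.mul_mem_left _ _ hf) (Ideal.mul_mem_left _ _ residue_mem)

lemma C_mul_left (q : ℚ) (hf : CongrNegGammaPow d c f) :
    CongrNegGammaPow d (q * c) (C (q : ℂ) * f) :=
  mul_left (by simp) hf

lemma sub_alpha_mul (h₁ : CongrNegGammaPow d a f₁) (h₂ : CongrNegGammaPow d b f₂) :
    CongrNegGammaPow d a (f₁ - X 0 * f₂) := by
  have neg_alpha_mul : CongrNegGammaPow d (0 * b) (-X 0 * f₂) :=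
    h₂.mul_left (by simpa using alpha_mem_J_one)
  simpa [sub_eq_add_neg] using h₁.add neg_alpha_mul

lemma betaP_pow_mul (hf : CongrNegGammaPow d c f) (r : ℕ) :
    CongrNegGammaPow d (16 ^ r * c) (betaP ^ r * f) := by
  have betaP_sub_mem : betaP - C ((16 : ℚ) : ℂ) ∈ J 1 := by
    rw [← betaSign_of_even Even.zero, show (16 : ℚ) = 8 + (-1) ^ 0 * 8 by norm_num]
    exact betaSign_sub_C_mem_J_one 0
  induction r with
  | zero => simpa using hf
  | succ r ih =>
    rw [pow_succ', pow_succ', mul_assoc, mul_assoc]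
    exact mul_left betaP_sub_mem ih

lemma neg_gamma_mul (hf : CongrNegGammaPow d c f) : CongrNegGammaPow (d + 1) c (-X 2 * f) := by
  have factor : -X 2 * f - C (c : ℂ) * (-X 2) ^ (d + 1)
      = -(X 2 * (f - C (c : ℂ) * (-X 2) ^ d)) := by
    ring
  rw [CongrNegGammaPow, factor]
  exact neg_mem (gamma_mul_mem_J hf)

end CongrNegGammaPow

section

variable {i m : ℕ} {a b c u : ℚ}

lemma congrNegGammaPow_betaProd_mul_zeta_succ
    (hu : CongrNegGammaPow (i + m + 1) u (betaProd (2 * i + m) * zetaDiff (m + 1)))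
    (hc : CongrNegGammaPow (i + m) c (betaProd (2 * i + m) * zeta m)) :
    CongrNegGammaPow (i + (m + 1)) ((((m : ℚ) + 2) ^ 2)⁻¹ * (u + 2 * (m + 2) * (m + 1) * c))
      (betaProd (2 * i + (m + 1)) * zeta (m + 1)) := by
  have scaled : CongrNegGammaPow (i + (m + 1)) (u + 2 * (m + 2) * (m + 1) * c)
      (C (((m : ℂ) + 2) ^ 2) * (betaProd (2 * i + (m + 1)) * zeta (m + 1))) := by
    rw [betaProd_mul_zeta_succ]
    have gamma_term := hc.neg_gamma_mul.C_mul_left (2 * (m + 2) * (m + 1))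
    push_cast at gamma_term
    exact hu.add gamma_term
  have sq_ne_zero : ((m : ℂ) + 2) ^ 2 ≠ 0 := by
    exact_mod_cast (by positivity : (m + 2) ^ 2 ≠ 0)
  have rescaled := scaled.C_mul_left (((m : ℚ) + 2) ^ 2)⁻¹
  push_cast at rescaled
  rwa [← mul_assoc, ← C_mul, inv_mul_cancel₀ sq_ne_zero, C_1, one_mul] at rescaled

lemma exists_congrNegGammaPow_betaProd_mul_zeta_of_zero_of_zetaDiff {c₀ : ℚ} (hc₀ : 0 ≤ c₀)
    (h_zero : CongrNegGammaPow i c₀ (betaProd (2 * i) * zeta 0)) {u : ℕ → ℚ} (hu : ∀ m, 0 ≤ u m)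
    (h_diff : ∀ m, CongrNegGammaPow (i + m + 1) (u m)
      (betaProd (2 * i + m) * zetaDiff (m + 1))) (m : ℕ) :
    ∃ c : ℚ, 0 ≤ c ∧ (0 < c₀ → 0 < c) ∧
      CongrNegGammaPow (i + m) c (betaProd (2 * i + m) * zeta m) := by
  induction m with
  | zero => exact ⟨c₀, hc₀, id, h_zero⟩
  | succ m ih =>
    obtain ⟨c, c_nonneg, c_pos, hc⟩ := ih
    have u_nonneg := hu m
    refine ⟨_, by positivity, fun c₀_pos ↦ ?_,
      congrNegGammaPow_betaProd_mul_zeta_succ (h_diff m) hc⟩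
    have := c_pos c₀_pos
    positivity

lemma exists_congrNegGammaPow_betaProd_mul_zeta_succ_of_zetaDiff {u : ℕ → ℚ} (hu : ∀ m, 0 ≤ u m)
    (h_diff : ∀ m, CongrNegGammaPow (i + 1 + m) (u m)
      (betaProd (2 * i + (m + 1)) * zetaDiff m)) (m : ℕ) :
    ∃ c : ℚ, 0 ≤ c ∧ (0 < u 0 → 0 < c) ∧
      CongrNegGammaPow (i + 1 + m) c (betaProd (2 * (i + 1) + m) * zeta m) := by
  refine exists_congrNegGammaPow_betaProd_mul_zeta_of_zero_of_zetaDiff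
    (hu 0) ?_ (fun m ↦ hu (m + 1)) (fun m ↦ ?_) m
  · rw [mul_add_one, betaProd_mul_zeta_zero]
    exact h_diff 0
  · rw [show 2 * (i + 1) + m = 2 * i + (m + 1 + 1) by ring]
    exact h_diff (m + 1)

lemma congrNegGammaPow_zero_betaProd_mul_zetaDiff
    (hc : CongrNegGammaPow (m + 1) c (betaProd (m + 1) * zeta (m + 1))) :
    CongrNegGammaPow (m + 1) 0 (betaProd (m + 1) * zetaDiff m) := by
  have zeta_term : CongrNegGammaPow (m + 1) 0 (betaProd (m + 1) * zeta (m + 2)) :=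
    .of_mem_J (Ideal.mul_mem_left _ _ (zeta_mem_J _))
  rw [zetaDiff, mul_sub, mul_left_comm]
  exact zeta_term.sub_alpha_mul hc

lemma congrNegGammaPow_betaProd_mul_zetaDiff_add_two
    (ha : CongrNegGammaPow (i + (m + 2)) a (betaProd (2 * i + (m + 2)) * zeta (m + 2)))
    (hb : CongrNegGammaPow (i + 1 + (m + 1)) b
      (betaProd (2 * (i + 1) + (m + 1)) * zeta (m + 1))) :
    CongrNegGammaPow (i + 2 + m) ((8 + (-1) ^ m * 8) * a)
      (betaProd (2 * (i + 1) + (m + 1)) * zetaDiff m) := by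
  have betaProd_eq :
      betaProd (2 * (i + 1) + (m + 1)) = betaSign m * betaProd (2 * i + (m + 2)) := by
    rw [← add_assoc, betaProd_succ, betaSign_two_mul_add, mul_comm, mul_add_one, add_assoc,
      add_comm 2]
  have zeta_term := ha.mul_left (betaSign_sub_C_mem_J_one m)
  rw [← mul_assoc, ← betaProd_eq, show i + (m + 2) = i + 2 + m by ring] at zeta_term
  rw [show i + 1 + (m + 1) = i + 2 + m by ring] at hb
  rw [zetaDiff, mul_sub, mul_left_comm]
  exact zeta_term.sub_alpha_mul hb

end

lemma exists_pos_congrNegGammaPow_betaProd_mul_zeta (m : ℕ) :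
    ∃ c : ℚ, 0 < c ∧ CongrNegGammaPow m c (betaProd m * zeta m) := by
  have h_zero : CongrNegGammaPow 0 1 (betaProd (2 * 0) * zeta 0) := by
    simp [CongrNegGammaPow, betaProd, zeta]
  have h_diff (m : ℕ) : CongrNegGammaPow (0 + m + 1) 0
      (betaProd (2 * 0 + m) * zetaDiff (m + 1)) := by
    rw [zero_add]
    exact .of_mem_J (Ideal.mul_mem_left _ _ (zetaDiff_mem_J_succ (m + 1)))
  obtain ⟨c, -, c_pos, hc⟩ := exists_congrNegGammaPow_betaProd_mul_zeta_of_zero_of_zetaDiff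
    zero_le_one h_zero (fun _ ↦ le_rfl) h_diff m
  exact ⟨c, c_pos one_pos, by simpa using hc⟩

theorem exists_congrNegGammaPow_betaProd_mul_zeta (i m : ℕ) :
    ∃ c : ℚ, 0 ≤ c ∧ (Even i → 0 < c) ∧
      CongrNegGammaPow (i + m) c (betaProd (2 * i + m) * zeta m) := by
  induction i using Nat.twoStepInduction generalizing m with
  | zero =>
    obtain ⟨c, c_pos, hc⟩ := exists_pos_congrNegGammaPow_betaProd_mul_zeta m
    exact ⟨c, c_pos.le, fun _ ↦ c_pos, by simpa using hc⟩
  | one =>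
    have h_diff (m : ℕ) : CongrNegGammaPow (0 + 1 + m) 0
        (betaProd (2 * 0 + (m + 1)) * zetaDiff m) := by
      obtain ⟨c, -, hc⟩ := exists_pos_congrNegGammaPow_betaProd_mul_zeta (m + 1)
      rw [mul_zero, zero_add, zero_add, add_comm 1]
      exact congrNegGammaPow_zero_betaProd_mul_zetaDiff hc
    obtain ⟨c, c_nonneg, -, hc⟩ :=
      exists_congrNegGammaPow_betaProd_mul_zeta_succ_of_zetaDiff (fun _ ↦ le_rfl) h_diff m
    exact ⟨c, c_nonneg, fun one_even ↦ absurd one_even Nat.not_even_one, hc⟩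
  | more i ih ih_succ =>
    choose a a_nonneg a_pos ha using ih
    choose b _ _ hb using ih_succ
    have u_nonneg (m : ℕ) : 0 ≤ (8 + (-1) ^ m * 8) * a (m + 2) :=
      mul_nonneg (by rcases neg_one_pow_eq_or ℚ m with h | h <;> norm_num [h]) (a_nonneg _)
    obtain ⟨c, c_nonneg, c_pos, hc⟩ := exists_congrNegGammaPow_betaProd_mul_zeta_succ_of_zetaDiff
      u_nonneg
      (fun m ↦ congrNegGammaPow_betaProd_mul_zetaDiff_add_two (ha (m + 2)) (hb (m + 1))) m
    refine ⟨c, c_nonneg, fun add_two_even ↦ c_pos ?_, hc⟩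
    have := a_pos 2 (by simpa [Nat.even_add] using add_two_even)
    positivity

/-- For g odd and j ≤ (g−1)/2, the element β₋^{j+(g−1)/2} β₊^{g−1} ζ_{g−2j−1} is
    equivalent modulo J_g to a positive rational multiple of γ^{g−1}. -/
theorem betaM_betaP_zeta_equiv_gamma_pow (g j : ℕ) (hg : 1 ≤ g) (hodd : Odd g)
    (hj : j ≤ (g - 1) / 2) :
    ∃ c : ℚ, 0 < c ∧
      betaM ^ (j + (g - 1) / 2) * betaP ^ (g - 1) * zeta (g - 2 * j - 1)
        - C (c : ℂ) * (X 2 : MvPolynomial (Fin 3) ℂ) ^ (g - 1) ∈ J g := by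
  obtain ⟨k, rfl⟩ := hodd
  obtain ⟨r, rfl⟩ := Nat.exists_eq_add_of_le (show j ≤ k by omega)
  obtain ⟨c, -, c_pos, hc⟩ := exists_congrNegGammaPow_betaProd_mul_zeta (2 * j) (2 * r)
  refine ⟨16 ^ r * c, mul_pos (by positivity) (c_pos (even_two_mul j)), ?_⟩
  have product_eq : betaP ^ r * (betaProd (2 * (2 * j) + 2 * r) * zeta (2 * r))
      = betaM ^ (j + (j + r)) * betaP ^ (2 * (j + r)) * zeta (2 * r) := by
    rw [← mul_add, betaProd_two_mul]
    ring
  have congr_gamma_pow := hc.betaP_pow_mul r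
  rw [CongrNegGammaPow, product_eq, ← mul_add, (even_two_mul (j + r)).neg_pow] at congr_gamma_pow
  rwa [show (2 * (j + r) + 1 - 1) / 2 = j + r by omega, Nat.add_sub_cancel,
    show 2 * (j + r) + 1 - 2 * j - 1 = 2 * r by omega]
end

section
/- Fix g ≥ 0 and let E (respectively O) denote the image in ℂ[α,γ]/J_g^- of the ℂ-span of the monomials α^j γ^i with i + j even (respectively i + j odd). Then ℂ[α,γ]/J_g^- = E ⊕ O and dim E = dim O = ½·⌊g/2⌋·(⌊g/2⌋ + 1). (Equivalently, the ℤ/4-graded Poincaré polynomial of J_g^- is ½⌊g/2⌋(⌊g/2⌋+1)·(1 + t²), where α and γ have grading 2 mod 4.) -/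
open MvPolynomial

/-- ζ_k^- ∈ ℂ[α,γ] (variables: X 0 = α, X 1 = γ):
    ζ_{k+1}^- = α ζ_k^- + 2k(k−1) γ ζ_{k−2}^- for k even, and
    ζ_{k+1}^- = α ζ_k^- − 16k² ζ_{k−1}^- + 2k(k−1) γ ζ_{k−2}^- for k odd. -/
noncomputable def zm : ℕ → MvPolynomial (Fin 2) ℂ
  | 0 => 1
  | 1 => X 0
  | 2 => X 0 * zm 1 - C 16 * zm 0
  | (n + 3) =>
      if n % 2 = 0 then
        X 0 * zm (n + 2) + C (2 * ((n : ℂ) + 2) * ((n : ℂ) + 1)) * X 1 * zm n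
      else
        X 0 * zm (n + 2) - C (16 * ((n : ℂ) + 2) ^ 2) * zm (n + 1)
          + C (2 * ((n : ℂ) + 2) * ((n : ℂ) + 1)) * X 1 * zm n

/-- ζ_k^- for an integer index k, with ζ_k^- = 0 for k < 0. -/
noncomputable def zmZ (k : ℤ) : MvPolynomial (Fin 2) ℂ :=
  if k < 0 then 0 else zm k.toNat

/-- J_g^- = (ζ_g^-, ζ_{g+1}^-, ζ_{g+2}^-) ⊆ ℂ[α,γ]. -/
noncomputable def Jm (g : ℕ) : Ideal (MvPolynomial (Fin 2) ℂ) :=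
  Ideal.span {zm g, zm (g + 1), zm (g + 2)}

/-- The image in ℂ[α,γ]/J_g^- of the ℂ-span of the monomials α^j γ^i with i + j even. -/
noncomputable def Em (g : ℕ) : Submodule ℂ (MvPolynomial (Fin 2) ℂ ⧸ Jm g) :=
  Submodule.span ℂ {q | ∃ i j : ℕ, (i + j) % 2 = 0 ∧
    q = Ideal.Quotient.mk (Jm g)
      ((X 0 : MvPolynomial (Fin 2) ℂ) ^ j * (X 1 : MvPolynomial (Fin 2) ℂ) ^ i)}

/-- The image in ℂ[α,γ]/J_g^- of the ℂ-span of the monomials α^j γ^i with i + j odd. -/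
noncomputable def Om (g : ℕ) : Submodule ℂ (MvPolynomial (Fin 2) ℂ ⧸ Jm g) :=
  Submodule.span ℂ {q | ∃ i j : ℕ, (i + j) % 2 = 1 ∧
    q = Ideal.Quotient.mk (Jm g)
      ((X 0 : MvPolynomial (Fin 2) ℂ) ^ j * (X 1 : MvPolynomial (Fin 2) ℂ) ^ i)}

/-!
Passing from `J_{2m}` to `J_{2m+2} = (ζ_{2m+2}) + γ J_{2m}` and using that `ζ_n` is monic of degree
`n` in `α` modulo `γ`, one finds inductively that the monomials `α ^ j γ ^ i` with `j + 2i < 2m`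
form a basis of `ℂ[α, γ] / J_{2m}`. The automorphism `α ↦ -α`, `γ ↦ -γ` preserves `J_g`, so the
monomials of each parity span one of its eigenspaces, and dimensions are read off from the basis.

It remains to see that `J_{2m+1} = J_{2m}`, that is `ζ_{2m} ∈ J_{2m+1}`. Otherwise the quotient
`J_{2m} / J_{2m+1}`, which is generated by `ζ_{2m}`, carries a linear functional `φ` with
`φ(ζ_{2m}) ≠ 0` that is an eigenvector for multiplication by `α`, with eigenvalue `l` say. The
recurrence for `ζ` makes `φ(γ ^ {m-k} ζ_{2k+1})` a positive multiple of `l * φ(γ ^ {m-k} ζ_{2k})`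
for all `k ≤ m`, with `l ^ 2 > 0` once one of these is nonzero; but `φ(ζ_{2m+1}) = 0` then forces
`φ(ζ_{2m}) = 0`.
-/

section Monomials

variable (K : Type*) [CommRing K]

/-- The `K`-basis of monomials `α ^ j * γ ^ i` of `K[α, γ]`, indexed by the exponents `(j, i)`. -/
noncomputable def monomialBasis : Module.Basis (ℕ × ℕ) K (MvPolynomial (Fin 2) K) :=
  (basisMonomials (Fin 2) K).reindex (Finsupp.equivFunOnFinite.trans (finTwoArrowEquiv ℕ))

theorem monomialBasis_apply (q : ℕ × ℕ) : monomialBasis K q = X 0 ^ q.1 * X 1 ^ q.2 := by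
  rw [monomialBasis, Module.Basis.reindex_apply, coe_basisMonomials]
  simp [monomial_eq]

/-- The span of the monomials `α ^ j * γ ^ i` with `(j, i)` in a given set of exponents. -/
noncomputable def monomialSpan (S : Set (ℕ × ℕ)) : Submodule K (MvPolynomial (Fin 2) K) :=
  Submodule.span K (monomialBasis K '' S)

variable {K} in
theorem monomialSpan_mono {S T : Set (ℕ × ℕ)} (hST : S ⊆ T) :
    monomialSpan K S ≤ monomialSpan K T :=
  Submodule.span_mono (Set.image_mono hST)

theorem monomialSpan_union (S T : Set (ℕ × ℕ)) :
    monomialSpan K (S ∪ T) = monomialSpan K S ⊔ monomialSpan K T := by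
  rw [monomialSpan, Set.image_union, Submodule.span_union, monomialSpan, monomialSpan]

theorem monomialSpan_univ : monomialSpan K Set.univ = ⊤ := by
  rw [monomialSpan, Set.image_univ, (monomialBasis K).span_eq]

end Monomials

section Recursion

variable {K : Type*} [CommRing K]

/-- The specialization `K[α, γ] → K[α]` at `γ = 0`. -/
noncomputable def evalGammaZero : MvPolynomial (Fin 2) K →ₐ[K] Polynomial K :=
  aeval ![Polynomial.X, 0]

/-- The inclusion `K[α] → K[α, γ]`, a section of `evalGammaZero`. -/
noncomputable def inclAlpha : Polynomial K →ₐ[K] MvPolynomial (Fin 2) K :=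
  Polynomial.aeval (X 0)

@[simp]
theorem evalGammaZero_X_zero : evalGammaZero (X 0 : MvPolynomial (Fin 2) K) = Polynomial.X := by
  simp [evalGammaZero]

@[simp]
theorem evalGammaZero_X_one : evalGammaZero (X 1 : MvPolynomial (Fin 2) K) = 0 := by
  simp [evalGammaZero]

@[simp]
theorem evalGammaZero_C (c : K) :
    evalGammaZero (C c : MvPolynomial (Fin 2) K) = Polynomial.C c := by
  simp [evalGammaZero, Polynomial.algebraMap_eq]

@[simp]
theorem evalGammaZero_inclAlpha (P : Polynomial K) : evalGammaZero (inclAlpha P) = P := by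
  rw [inclAlpha, ← Polynomial.aeval_algHom_apply, evalGammaZero_X_zero,
    Polynomial.aeval_X_left_apply]

theorem X_one_dvd_sub_inclAlpha (f : MvPolynomial (Fin 2) K) :
    X 1 ∣ f - inclAlpha (evalGammaZero f) := by
  induction f using MvPolynomial.induction_on with
  | C c => simp [inclAlpha, MvPolynomial.algebraMap_eq]
  | add f g hf hg => simpa only [map_add, add_sub_add_comm] using dvd_add hf hg
  | mul_X f i hf =>
    fin_cases i
    · simpa [inclAlpha, ← sub_mul] using hf.mul_right (X 0)
    · simp

theorem X_one_dvd_of_evalGammaZero_eq_zero {f : MvPolynomial (Fin 2) K}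
    (hf : evalGammaZero f = 0) : X 1 ∣ f := by
  simpa [hf] using X_one_dvd_sub_inclAlpha f

variable {p : MvPolynomial (Fin 2) K} {n : ℕ} {I : Ideal (MvPolynomial (Fin 2) K)}
  {W : Submodule K (MvPolynomial (Fin 2) K)}

theorem codisjoint_sup_X_one_mul (hmonic : (evalGammaZero p).IsMonicOfDegree n)
    (hW : Codisjoint W (I.restrictScalars K)) :
    Codisjoint ((Polynomial.degreeLT K n).map inclAlpha.toLinearMap ⊔
        W.map (LinearMap.mulLeft K (X 1)))
      ((Ideal.span {p} ⊔ Ideal.span {X 1} * I).restrictScalars K) := by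
  rw [Submodule.codisjoint_iff_exists_add_eq] at hW ⊢
  intro f
  set q := evalGammaZero p with hq
  set P := evalGammaZero f with hP
  obtain ⟨h, hh⟩ : X 1 ∣ f - inclAlpha (P %ₘ q) - inclAlpha (P /ₘ q) * p := by
    apply X_one_dvd_of_evalGammaZero_eq_zero
    rw [map_sub, map_sub, map_mul, evalGammaZero_inclAlpha, evalGammaZero_inclAlpha, ← hP, ← hq,
      sub_sub, mul_comm, Polynomial.modByMonic_add_div, sub_self]
  obtain ⟨w, i, hw, hi, rfl⟩ := hW h
  have hrem : P %ₘ q ∈ Polynomial.degreeLT K n := by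
    nontriviality K
    rw [Polynomial.mem_degreeLT, ← hmonic.natDegree_eq,
      ← Polynomial.degree_eq_natDegree hmonic.ne_zero]
    exact Polynomial.degree_modByMonic_lt P hmonic.monic
  refine ⟨inclAlpha (P %ₘ q) + X 1 * w, inclAlpha (P /ₘ q) * p + X 1 * i,
    Submodule.add_mem_sup (Submodule.mem_map_of_mem hrem) (Submodule.mem_map_of_mem hw),
    Submodule.add_mem_sup (Ideal.mul_mem_left _ _ (Ideal.mem_span_singleton_self p))
      (Ideal.mul_mem_mul (Ideal.mem_span_singleton_self _) hi), ?_⟩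
  linear_combination -hh

theorem disjoint_sup_X_one_mul (hmonic : (evalGammaZero p).IsMonicOfDegree n) (hp : p ∈ I)
    (hW : Disjoint W (I.restrictScalars K)) :
    Disjoint ((Polynomial.degreeLT K n).map inclAlpha.toLinearMap ⊔
        W.map (LinearMap.mulLeft K (X 1)))
      ((Ideal.span {p} ⊔ Ideal.span {X 1} * I).restrictScalars K) := by
  nontriviality K
  rw [Submodule.disjoint_def] at hW ⊢
  intro f hfW hfI
  obtain ⟨_, ⟨P, hP, rfl⟩, _, ⟨w, hw, rfl⟩, rfl⟩ := Submodule.mem_sup.1 hfW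
  obtain ⟨_, hap, _, hγi, heq⟩ := Submodule.mem_sup.1 hfI
  obtain ⟨a, rfl⟩ := Ideal.mem_span_singleton'.1 hap
  obtain ⟨i, hi, rfl⟩ := Ideal.mem_span_singleton_mul.1 hγi
  simp only [AlgHom.toLinearMap_apply, LinearMap.mulLeft_apply] at heq ⊢
  have hPa : evalGammaZero a * evalGammaZero p = P := by
    simpa using congrArg evalGammaZero heq
  have hP0 : P = 0 := by
    by_contra hne
    refine hmonic.monic.not_dvd_of_degree_lt hne ?_ (Dvd.intro_left _ hPa)
    rw [Polynomial.degree_eq_natDegree hmonic.ne_zero, hmonic.natDegree_eq]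
    exact Polynomial.mem_degreeLT.1 hP
  obtain ⟨b, rfl⟩ : X 1 ∣ a :=
    X_one_dvd_of_evalGammaZero_eq_zero (hmonic.monic.mul_left_eq_zero_iff.1 (hPa.trans hP0))
  rw [hP0, map_zero, zero_add] at heq ⊢
  have hwI : w = b * p + i := X_mul_cancel_left_iff.1 (by linear_combination -heq)
  rw [hW w hw (hwI ▸ add_mem (I.mul_mem_left b hp) hi), mul_zero]

/-- Multiplication by `γ` embeds `K[α, γ] / I` into the quotient by `(p) + γ I`, with cokernel
`K[α] / (p(α, 0))`. -/
theorem isCompl_sup_X_one_mul (hmonic : (evalGammaZero p).IsMonicOfDegree n) (hp : p ∈ I)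
    (hW : IsCompl W (I.restrictScalars K)) :
    IsCompl ((Polynomial.degreeLT K n).map inclAlpha.toLinearMap ⊔
        W.map (LinearMap.mulLeft K (X 1)))
      ((Ideal.span {p} ⊔ Ideal.span {X 1} * I).restrictScalars K) :=
  ⟨disjoint_sup_X_one_mul hmonic hp hW.disjoint, codisjoint_sup_X_one_mul hmonic hW.codisjoint⟩

end Recursion

section Parity

variable (K : Type*) [CommRing K] (J : Ideal (MvPolynomial (Fin 2) K))

/-- The exponents `(j, i)` of the monomials `α ^ j * γ ^ i` with `(i + j) % 2 = r`. -/
def parityClass (r : ℕ) : Set (ℕ × ℕ) := {q | (q.2 + q.1) % 2 = r}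

theorem parityClass_zero_union_parityClass_one : parityClass 0 ∪ parityClass 1 = Set.univ :=
  Set.eq_univ_of_forall fun q ↦ Nat.mod_two_eq_zero_or_one (q.2 + q.1)

/-- The automorphism `α ↦ -α`, `γ ↦ -γ` of `K[α, γ]`. -/
noncomputable def negVars : MvPolynomial (Fin 2) K →ₐ[K] MvPolynomial (Fin 2) K :=
  aeval fun i ↦ -X i

@[simp]
theorem negVars_X (i : Fin 2) : negVars K (X i) = -X i := aeval_X _ i

@[simp]
theorem negVars_C (c : K) : negVars K (C c) = C c := aeval_C _ c

theorem negVars_monomialBasis {r : ℕ} {q : ℕ × ℕ} (hq : q ∈ parityClass r) :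
    negVars K (monomialBasis K q) = (-1 : K) ^ r • monomialBasis K q := by
  have hr : (q.2 + q.1) % 2 = r := hq
  rw [← hr, ← neg_one_pow_eq_pow_mod_two, monomialBasis_apply, map_mul, map_pow, map_pow,
    negVars_X, negVars_X, neg_pow (X 0 : MvPolynomial _ K),
    neg_pow (X 1 : MvPolynomial _ K), pow_add, smul_eq_C_mul]
  simp only [map_mul, map_pow, map_neg, map_one]
  ring

/-- The image in `K[α, γ] / J` of the span of the monomials with exponents in `S`. -/
noncomputable def quotientMonomialSpan (S : Set (ℕ × ℕ)) :
    Submodule K (MvPolynomial (Fin 2) K ⧸ J) :=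
  (monomialSpan K S).map (Ideal.Quotient.mkₐ K J).toLinearMap

theorem quotientMonomialSpan_mono {S T : Set (ℕ × ℕ)} (hST : S ⊆ T) :
    quotientMonomialSpan K J S ≤ quotientMonomialSpan K J T :=
  Submodule.map_mono (monomialSpan_mono hST)

theorem quotientMonomialSpan_union (S T : Set (ℕ × ℕ)) :
    quotientMonomialSpan K J (S ∪ T) =
      quotientMonomialSpan K J S ⊔ quotientMonomialSpan K J T := by
  rw [quotientMonomialSpan, monomialSpan_union, Submodule.map_sup, quotientMonomialSpan,
    quotientMonomialSpan]

variable {K J}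

theorem codisjoint_quotientMonomialSpan_parityClass :
    Codisjoint (quotientMonomialSpan K J (parityClass 0))
      (quotientMonomialSpan K J (parityClass 1)) := by
  rw [codisjoint_iff, ← quotientMonomialSpan_union, parityClass_zero_union_parityClass_one,
    quotientMonomialSpan, monomialSpan_univ, Submodule.map_top]
  exact LinearMap.range_eq_top.2 (Ideal.Quotient.mkₐ_surjective K J)

theorem quotientMonomialSpan_parityClass_le_eigenspace (hJ : J ≤ J.comap (negVars K)) (r : ℕ) :
    quotientMonomialSpan K J (parityClass r) ≤
      Module.End.eigenspace (Ideal.quotientMapₐ J (negVars K) hJ).toLinearMap ((-1) ^ r) := by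
  rw [quotientMonomialSpan, monomialSpan, Submodule.map_span_le]
  rintro _ ⟨q, hq, rfl⟩
  rw [Module.End.mem_eigenspace_iff, ← map_smul, ← negVars_monomialBasis K hq]
  rfl

theorem disjoint_quotientMonomialSpan_parityClass (h2 : IsUnit (2 : K))
    (hJ : J ≤ J.comap (negVars K)) :
    Disjoint (quotientMonomialSpan K J (parityClass 0))
      (quotientMonomialSpan K J (parityClass 1)) := by
  rw [Submodule.disjoint_def]
  intro x heven hodd
  have hx := Module.End.mem_eigenspace_iff.1
    (quotientMonomialSpan_parityClass_le_eigenspace hJ 0 heven)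
  have hnegx := Module.End.mem_eigenspace_iff.1
    (quotientMonomialSpan_parityClass_le_eigenspace hJ 1 hodd)
  rw [pow_zero, one_smul] at hx
  rw [pow_one, neg_one_smul, hx, eq_neg_iff_add_eq_zero, ← two_smul K] at hnegx
  exact h2.smul_eq_zero.1 hnegx

variable {T : Set (ℕ × ℕ)}

theorem ker_mkₐ_toLinearMap : (Ideal.Quotient.mkₐ K J).toLinearMap.ker = J.restrictScalars K :=
  Submodule.ext fun _ ↦ Ideal.Quotient.eq_zero_iff_mem

theorem quotientMonomialSpan_eq_top (hT : Codisjoint (monomialSpan K T) (J.restrictScalars K)) :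
    quotientMonomialSpan K J T = ⊤ := by
  have hrange : (Ideal.Quotient.mkₐ K J).toLinearMap.range = ⊤ :=
    LinearMap.range_eq_top.2 (Ideal.Quotient.mkₐ_surjective K J)
  rw [quotientMonomialSpan, ← hrange, Submodule.map_eq_range_iff, ker_mkₐ_toLinearMap]
  exact hT

theorem finrank_quotientMonomialSpan [Nontrivial K]
    (hT : Disjoint (monomialSpan K T) (J.restrictScalars K)) :
    Module.finrank K (quotientMonomialSpan K J T) = T.ncard := by
  have hrange : Set.range (monomialBasis K ∘ ((↑) : T → ℕ × ℕ)) = monomialBasis K '' T := by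
    rw [Set.range_comp, Subtype.range_coe]
  have hindep : LinearIndependent K
      ((Ideal.Quotient.mkₐ K J).toLinearMap ∘ monomialBasis K ∘ ((↑) : T → ℕ × ℕ)) := by
    refine ((monomialBasis K).linearIndependent.comp _ Subtype.val_injective).map ?_
    rwa [hrange, ker_mkₐ_toLinearMap]
  rw [quotientMonomialSpan, monomialSpan, Submodule.map_span, ← hrange, ← Set.range_comp,
    Module.finrank_eq_nat_card_basis (Module.Basis.span hindep), Nat.card_coe_set_eq]

theorem quotientMonomialSpan_inter_parityClass (h2 : IsUnit (2 : K))
    (hJ : J ≤ J.comap (negVars K)) (hT : Codisjoint (monomialSpan K T) (J.restrictScalars K))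
    {r : ℕ} (hr : r < 2) :
    quotientMonomialSpan K J (T ∩ parityClass r) = quotientMonomialSpan K J (parityClass r) := by
  have hcodisj : Codisjoint (quotientMonomialSpan K J (T ∩ parityClass 0))
      (quotientMonomialSpan K J (T ∩ parityClass 1)) := by
    rw [codisjoint_iff, ← quotientMonomialSpan_union, ← Set.inter_union_distrib_left,
      parityClass_zero_union_parityClass_one, Set.inter_univ, quotientMonomialSpan_eq_top hT]
  have hdisj := disjoint_quotientMonomialSpan_parityClass h2 hJ
  have hle (s : ℕ) : quotientMonomialSpan K J (T ∩ parityClass s) ≤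
      quotientMonomialSpan K J (parityClass s) :=
    quotientMonomialSpan_mono K J Set.inter_subset_right
  interval_cases r
  · exact (le_iff_eq_of_codisjoint_of_disjoint hcodisj (hdisj.symm.mono_left (hle 1))).1 (hle 0)
  · exact (le_iff_eq_of_codisjoint_of_disjoint hcodisj.symm (hdisj.mono_left (hle 0))).1 (hle 1)

end Parity

section Zeta

/-- The coefficient `a_k` of the uniform recurrence
`ζ_{k+1} = α ζ_k - a_k ζ_{k-1} + 2k(k-1) γ ζ_{k-2}`. -/
noncomputable def zmCoeff (k : ℕ) : ℂ := if Even k then 0 else 16 * (k : ℂ) ^ 2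

theorem zmCoeff_even (m : ℕ) : zmCoeff (2 * m) = 0 := if_pos (even_two_mul m)

theorem zmCoeff_odd (m : ℕ) : zmCoeff (2 * m + 1) = 16 * (2 * (m : ℂ) + 1) ^ 2 := by
  rw [zmCoeff, if_neg (Nat.not_even_iff_odd.2 (odd_two_mul_add_one m))]
  push_cast
  rfl

theorem zm_two : zm 2 = X 0 * zm 1 - C (zmCoeff 1) * zm 0 := by
  have hcoeff : zmCoeff 1 = 16 := by simpa using zmCoeff_odd 0
  rw [hcoeff]
  exact zm.eq_3

theorem zm_add_three (n : ℕ) : zm (n + 3) = X 0 * zm (n + 2) - C (zmCoeff (n + 2)) * zm (n + 1) +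
    C (2 * ((n : ℂ) + 2) * ((n : ℂ) + 1)) * X 1 * zm n := by
  rw [zm, zmCoeff]
  rcases Nat.even_or_odd n with hn | hn
  · rw [if_pos (Nat.even_iff.1 hn), if_pos (hn.add even_two), C_0, zero_mul, sub_zero]
  · rw [if_neg (by rw [Nat.odd_iff.1 hn]; exact one_ne_zero),
      if_neg (Nat.not_even_iff_odd.2 (hn.add_even even_two))]
    push_cast
    rfl

theorem negVars_zm (n : ℕ) : negVars ℂ (zm n) = (-1) ^ n * zm n := by
  induction n using Nat.strong_induction_on with
  | _ n ih =>
    match n with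
    | 0 => simp [zm]
    | 1 => simp [zm]
    | 2 => simp [zm]
    | n + 3 =>
      rw [zm_add_three]
      simp only [map_add, map_sub, map_mul, negVars_X, negVars_C, ih n (by lia),
        ih (n + 1) (by lia), ih (n + 2) (by lia)]
      ring

theorem isMonicOfDegree_X_mul_sub_C_mul {R : Type*} [Ring R] [Nontrivial R] {P Q : Polynomial R}
    {n : ℕ} (hQ : Q.IsMonicOfDegree (n + 1)) (hP : P.IsMonicOfDegree n) (c : R) :
    (Polynomial.X * Q - Polynomial.C c * P).IsMonicOfDegree (n + 2) := by
  have hXQ : (Polynomial.X * Q).IsMonicOfDegree (n + 2) := by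
    simpa only [add_comm 1] using (Polynomial.isMonicOfDegree_X R).mul hQ
  refine hXQ.sub ?_
  calc (Polynomial.C c * P).natDegree ≤ P.natDegree := Polynomial.natDegree_C_mul_le c P
    _ = n := hP.natDegree_eq
    _ < n + 2 := by lia

theorem isMonicOfDegree_evalGammaZero_zm (n : ℕ) : (evalGammaZero (zm n)).IsMonicOfDegree n := by
  induction n using Nat.twoStepInduction with
  | zero => simp [zm]
  | one => simpa [zm] using Polynomial.isMonicOfDegree_X ℂ
  | more n hn hn1 =>
    cases n with
    | zero => simpa [zm_two] using isMonicOfDegree_X_mul_sub_C_mul hn1 hn (zmCoeff 1)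
    | succ n => simpa [zm_add_three] using isMonicOfDegree_X_mul_sub_C_mul hn1 hn (zmCoeff (n + 2))

end Zeta

section Ideals

variable {g : ℕ} {I : Ideal (MvPolynomial (Fin 2) ℂ)}

theorem zm_mem_Jm (g : ℕ) : zm g ∈ Jm g := Ideal.subset_span (by simp)

theorem zm_add_one_mem_Jm (g : ℕ) : zm (g + 1) ∈ Jm g := Ideal.subset_span (by simp)

theorem zm_add_two_mem_Jm (g : ℕ) : zm (g + 2) ∈ Jm g := Ideal.subset_span (by simp)

theorem zm_add_three_mem_Jm (g : ℕ) : zm (g + 3) ∈ Jm g := by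
  rw [zm_add_three]
  exact add_mem (sub_mem (Ideal.mul_mem_left _ _ (zm_add_two_mem_Jm g))
    (Ideal.mul_mem_left _ _ (zm_add_one_mem_Jm g))) (Ideal.mul_mem_left _ _ (zm_mem_Jm g))

theorem Jm_le_iff : Jm g ≤ I ↔ zm g ∈ I ∧ zm (g + 1) ∈ I ∧ zm (g + 2) ∈ I := by
  simp [Jm, Ideal.span_le, Set.insert_subset_iff]

theorem span_X_one_mul_Jm_le_iff : Ideal.span {X 1} * Jm g ≤ I ↔
    X 1 * zm g ∈ I ∧ X 1 * zm (g + 1) ∈ I ∧ X 1 * zm (g + 2) ∈ I := by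
  simp [Jm, Ideal.span_mul_span', Ideal.span_le, Set.insert_subset_iff]

theorem Jm_zero : Jm 0 = ⊤ := (Ideal.eq_top_iff_one _).2 (zm_mem_Jm 0)

theorem Jm_succ_le (g : ℕ) : Jm (g + 1) ≤ Jm g :=
  Jm_le_iff.2 ⟨zm_add_one_mem_Jm g, zm_add_two_mem_Jm g, zm_add_three_mem_Jm g⟩

theorem Jm_le_comap_negVars (g : ℕ) : Jm g ≤ (Jm g).comap (negVars ℂ) := by
  rw [Jm_le_iff]
  simp only [Ideal.mem_comap, negVars_zm]
  exact ⟨Ideal.mul_mem_left _ _ (zm_mem_Jm g), Ideal.mul_mem_left _ _ (zm_add_one_mem_Jm g),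
    Ideal.mul_mem_left _ _ (zm_add_two_mem_Jm g)⟩

theorem X_one_mul_zm_mem {n : ℕ} (h₁ : C (zmCoeff (n + 2)) * zm (n + 1) ∈ I)
    (h₂ : zm (n + 2) ∈ I) (h₃ : zm (n + 3) ∈ I) : X 1 * zm n ∈ I := by
  have hc : 2 * ((n : ℂ) + 2) * ((n : ℂ) + 1) ≠ 0 := by norm_cast
  rw [← I.unit_mul_mem_iff_mem (hc.isUnit.map C)]
  have heq : C (2 * ((n : ℂ) + 2) * ((n : ℂ) + 1)) * (X 1 * zm n) =
      zm (n + 3) - X 0 * zm (n + 2) + C (zmCoeff (n + 2)) * zm (n + 1) := by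
    rw [zm_add_three]
    ring
  rw [heq]
  exact add_mem (sub_mem h₃ (Ideal.mul_mem_left _ _ h₂)) h₁

theorem X_one_mul_zm_mem_Jm_succ (g : ℕ) : X 1 * zm g ∈ Jm (g + 1) :=
  X_one_mul_zm_mem (Ideal.mul_mem_left _ _ (zm_mem_Jm (g + 1))) (zm_add_one_mem_Jm (g + 1))
    (zm_add_two_mem_Jm (g + 1))

theorem span_X_one_mul_Jm_le (g : ℕ) : Ideal.span {X 1} * Jm g ≤ Jm (g + 1) :=
  span_X_one_mul_Jm_le_iff.2 ⟨X_one_mul_zm_mem_Jm_succ g,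
    Ideal.mul_mem_left _ _ (zm_mem_Jm (g + 1)), Ideal.mul_mem_left _ _ (zm_add_one_mem_Jm (g + 1))⟩

theorem span_X_one_mul_Jm_two_mul_le (m : ℕ) :
    Ideal.span {X 1} * Jm (2 * m) ≤ Jm (2 * m + 2) := by
  refine span_X_one_mul_Jm_le_iff.2 ⟨X_one_mul_zm_mem ?_ (zm_mem_Jm _) (zm_add_one_mem_Jm _),
    X_one_mul_zm_mem_Jm_succ _, Ideal.mul_mem_left _ _ (zm_mem_Jm _)⟩
  rw [show 2 * m + 2 = 2 * (m + 1) from rfl, zmCoeff_even, C_0, zero_mul]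
  exact zero_mem _

theorem Jm_two_mul_add_two (m : ℕ) :
    Jm (2 * m + 2) = Ideal.span {zm (2 * m + 2)} ⊔ Ideal.span {X 1} * Jm (2 * m) := by
  apply le_antisymm
  · set I := Ideal.span {zm (2 * m + 2)} ⊔ Ideal.span {X 1} * Jm (2 * m)
    have hX_one_mul {f : MvPolynomial (Fin 2) ℂ} (hf : f ∈ Jm (2 * m)) (c : ℂ) :
        C c * X 1 * f ∈ I := by
      rw [mul_assoc]
      exact I.mul_mem_left _ (Ideal.mem_sup_right
        (Ideal.mul_mem_mul (Ideal.mem_span_singleton_self _) hf))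
    have h₂ : zm (2 * m + 2) ∈ I := Ideal.mem_sup_left (Ideal.mem_span_singleton_self _)
    have h₃ : zm (2 * m + 3) ∈ I := by
      rw [zm_add_three, show 2 * m + 2 = 2 * (m + 1) from rfl, zmCoeff_even, C_0, zero_mul,
        sub_zero]
      exact add_mem (I.mul_mem_left _ h₂) (hX_one_mul (zm_mem_Jm _) _)
    have h₄ : zm (2 * m + 4) ∈ I := by
      rw [zm_add_three (2 * m + 1)]
      exact add_mem (sub_mem (I.mul_mem_left _ h₃) (I.mul_mem_left _ h₂))
        (hX_one_mul (zm_add_one_mem_Jm _) _)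
    exact Jm_le_iff.2 ⟨h₂, h₃, h₄⟩
  · refine sup_le ?_ (span_X_one_mul_Jm_two_mul_le m)
    exact (Ideal.span_singleton_le_iff_mem _).2 (zm_mem_Jm _)

theorem X_one_pow_mul_mem_Jm (i : ℕ) {k : ℕ} {f : MvPolynomial (Fin 2) ℂ} (hf : f ∈ Jm (2 * k)) :
    X 1 ^ i * f ∈ Jm (2 * (k + i)) := by
  induction i with
  | zero => simpa using hf
  | succ i ih =>
    rw [pow_succ', mul_assoc]
    exact span_X_one_mul_Jm_two_mul_le (k + i)
      (Ideal.mul_mem_mul (Ideal.mem_span_singleton_self _) ih)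

end Ideals

section Complement

/-- The exponents `(j, i)` of the monomials `α ^ j * γ ^ i` with `j + 2 * i < n`. -/
def weightLT (n : ℕ) : Set (ℕ × ℕ) := {q | q.1 + 2 * q.2 < n}

theorem weightLT_add_two (n : ℕ) : weightLT (n + 2) =
    (fun j ↦ (j, 0)) '' Set.Iio (n + 2) ∪ (fun q ↦ (q.1, q.2 + 1)) '' weightLT n := by
  ext ⟨j, i⟩
  cases i with
  | zero => simp [weightLT]
  | succ i =>
    have hshift : j + 2 * (i + 1) < n + 2 ↔ j + 2 * i < n := by lia
    simpa [weightLT] using hshift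

theorem monomialSpan_weightLT_add_two (K : Type*) [CommRing K] (n : ℕ) :
    monomialSpan K (weightLT (n + 2)) =
      (Polynomial.degreeLT K (n + 2)).map inclAlpha.toLinearMap ⊔
        (monomialSpan K (weightLT n)).map (LinearMap.mulLeft K (X 1)) := by
  rw [weightLT_add_two, monomialSpan_union]
  congr 1
  · classical
    rw [monomialSpan, Polynomial.degreeLT_eq_span_X_pow, Submodule.map_span, Set.image_image,
      Finset.coe_image, Set.image_image, Finset.coe_range]
    simp [monomialBasis_apply, inclAlpha]
  · rw [monomialSpan, monomialSpan, Submodule.map_span, Set.image_image, Set.image_image]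
    simp [monomialBasis_apply, pow_succ', mul_left_comm]

theorem isCompl_monomialSpan_weightLT_Jm_two_mul (m : ℕ) :
    IsCompl (monomialSpan ℂ (weightLT (2 * m))) ((Jm (2 * m)).restrictScalars ℂ) := by
  induction m with
  | zero =>
    rw [mul_zero, Jm_zero, Submodule.restrictScalars_top]
    simpa [monomialSpan, weightLT] using isCompl_bot_top
  | succ m ih =>
    rw [mul_add_one, Jm_two_mul_add_two, monomialSpan_weightLT_add_two]
    exact isCompl_sup_X_one_mul (isMonicOfDegree_evalGammaZero_zm _) (zm_add_two_mem_Jm _) ih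

end Complement

section Positivity

/-- `y` is a positive multiple of `l * x` where, unless `x = 0`, `l ^ 2` lies in `(0, β]`. This is
the invariant carried along the recurrence of `eq_zero_of_recurrence`. -/
def IsPositiveMultiple (l : ℂ) (β : ℝ) (x y : ℂ) : Prop :=
  ∃ r : ℝ, 0 < r ∧ y = r * l * x ∧ (x ≠ 0 → ∃ s : ℝ, 0 < s ∧ s ≤ β ∧ l ^ 2 = s)

namespace IsPositiveMultiple

variable {l x y x' y' : ℂ} {β β' c d : ℝ}

theorem eq_zero (h : IsPositiveMultiple l β x y) (hy : y = 0) : x = 0 := by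
  by_contra hx
  obtain ⟨r, hr, rfl, hl⟩ := h
  obtain ⟨s, hs, -, hls⟩ := hl hx
  have hl0 : l = 0 := by simpa [hr.ne', hx] using hy
  rw [hl0, zero_pow two_ne_zero] at hls
  exact hs.ne (by exact_mod_cast hls)

theorem of_eq_mul (hβ : 0 < β) (hy : y = l * x) (hly : l * y = β * x) :
    IsPositiveMultiple l β x y := by
  refine ⟨1, one_pos, by simpa using hy, fun hx ↦ ⟨β, hβ, le_rfl, mul_right_cancel₀ hx ?_⟩⟩
  linear_combination hly - l * hy

theorem step (h : IsPositiveMultiple l β x y) (hβ : 0 < β') (hββ' : β < β') (hc : 0 ≤ c)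
    (hd : 0 < d) (hy : y' = l * x' + c * x) (hly : l * y' = β' * x' - d * y) :
    IsPositiveMultiple l β' x' y' := by
  obtain ⟨r, hr, rfl, hl⟩ := h
  by_cases hx : x = 0
  · exact of_eq_mul hβ (by simpa [hx] using hy) (by simpa [hx] using hly)
  obtain ⟨s, hs, hsβ, hls⟩ := hl hx
  have hcdr : 0 < c + d * r := by positivity
  have hkey : (β' - s : ℂ) * x' = l * (c + d * r) * x := by
    linear_combination l * hy - hly + x' * hls
  refine ⟨1 + c * (β' - s) / (s * (c + d * r)), ?_, ?_, fun _ ↦ ⟨s, hs, by linarith, hls⟩⟩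
  · have : 0 ≤ β' - s := by linarith
    positivity
  · have hs' : (s : ℂ) ≠ 0 := by exact_mod_cast hs.ne'
    have hcdr' : (c + d * r : ℂ) ≠ 0 := by exact_mod_cast hcdr.ne'
    rw [hy]
    push_cast
    field_simp
    linear_combination -c * l * hkey - c * x * (c + d * r) * hls

end IsPositiveMultiple

theorem eq_zero_of_recurrence {l : ℂ} {x y : ℕ → ℂ} {b c d : ℕ → ℝ} {m : ℕ} (hb : StrictMono b)
    (hb0 : 0 < b 0) (hc : ∀ k, 0 ≤ c k) (hd : ∀ k, 0 < d k)
    (hy0 : y 0 = l * x 0) (hly0 : l * y 0 = b 0 * x 0)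
    (hy : ∀ k < m, y (k + 1) = l * x (k + 1) + c k * x k)
    (hly : ∀ k < m, l * y (k + 1) = b (k + 1) * x (k + 1) - d k * y k)
    (hym : y m = 0) : x m = 0 := by
  have hinv (k : ℕ) (hk : k ≤ m) : IsPositiveMultiple l (b k) (x k) (y k) := by
    induction k with
    | zero => exact .of_eq_mul hb0 hy0 hly0
    | succ k ih =>
      exact (ih (by lia)).step (hb0.trans (hb k.succ_pos)) (hb k.lt_succ_self) (hc k) (hd k)
        (hy k hk) (hly k hk)
  exact (hinv m le_rfl).eq_zero hym

end Positivity

section Eigenfunctional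

variable {σ K : Type*} [Finite σ] [Field K] [IsAlgClosed K]

theorem exists_eval_eq_zero_of_mul_mem {I : Ideal (MvPolynomial σ K)} {z : MvPolynomial σ K}
    (hz : z ∉ I) : ∃ a : σ → K, ∀ f, f * z ∈ I → eval a f = 0 := by
  have hproper : I.colon {z} ≠ ⊤ := fun htop ↦ hz <| by
    simpa using Submodule.mem_colon_singleton.1 ((Ideal.eq_top_iff_one _).1 htop)
  obtain ⟨M, hM, hle⟩ := Ideal.exists_le_maximal _ hproper
  obtain ⟨a, rfl⟩ := isMaximal_iff_eq_vanishingIdeal_singleton.1 hM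
  refine ⟨a, fun f hf ↦ ?_⟩
  simpa using (mem_vanishingIdeal_singleton_iff a f).1 (hle (Submodule.mem_colon_singleton.2 hf))

theorem exists_dual_mul_eq_eval_mul {I : Ideal (MvPolynomial σ K)} {z : MvPolynomial σ K}
    (hz : z ∉ I) :
    ∃ (a : σ → K) (φ : Module.Dual K (MvPolynomial σ K)), φ z = 1 ∧ (∀ f ∈ I, φ f = 0) ∧
      ∀ h ∈ I ⊔ Ideal.span {z}, ∀ f, φ (f * h) = eval a f * φ h := by
  obtain ⟨a, ha⟩ := exists_eval_eq_zero_of_mul_mem hz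
  let mulZ : MvPolynomial σ K →ₗ[K] MvPolynomial σ K ⧸ I :=
    (Ideal.Quotient.mkₐ K I).toLinearMap ∘ₗ LinearMap.mulRight K z
  have hmem : (aeval a).toLinearMap ∈ mulZ.dualMap.range := by
    rw [LinearMap.range_dualMap_eq_dualAnnihilator_ker, Submodule.mem_dualAnnihilator]
    exact fun f hf ↦ ha f (Ideal.Quotient.eq_zero_iff_mem.1 hf)
  obtain ⟨ψ, hψ⟩ := hmem
  let φ : Module.Dual K (MvPolynomial σ K) := ψ ∘ₗ (Ideal.Quotient.mkₐ K I).toLinearMap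
  have hφz (f : MvPolynomial σ K) : φ (f * z) = eval a f := LinearMap.congr_fun hψ f
  have hφI (f : MvPolynomial σ K) (hf : f ∈ I) : φ f = 0 := by
    simp [φ, Ideal.Quotient.eq_zero_iff_mem.2 hf]
  refine ⟨a, φ, by simpa using hφz 1, hφI, fun h hh f ↦ ?_⟩
  obtain ⟨i, hi, _, hz', rfl⟩ := Submodule.mem_sup.1 hh
  obtain ⟨k, rfl⟩ := Ideal.mem_span_singleton'.1 hz'
  rw [mul_add, map_add, map_add, hφI _ (I.mul_mem_left f hi), hφI i hi, ← mul_assoc, hφz, hφz,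
    map_mul, zero_add, zero_add]

end Eigenfunctional

section Odd

variable {m : ℕ}

theorem X_one_pow_sub_mul_mem_Jm {k : ℕ} (hk : k ≤ m) {f : MvPolynomial (Fin 2) ℂ}
    (hf : f ∈ Jm (2 * k)) : X 1 ^ (m - k) * f ∈ Jm (2 * m) := by
  simpa [Nat.add_sub_cancel' hk] using X_one_pow_mul_mem_Jm (m - k) hf

theorem pow_sub_eq_mul_pow_sub_succ {M : Type*} [Monoid M] (a : M) {k : ℕ} (hk : k < m) :
    a ^ (m - k) = a * a ^ (m - (k + 1)) := by
  rw [← pow_succ', show m - (k + 1) + 1 = m - k by lia]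

theorem X_one_pow_mul_zm_mem_Jm_two_mul_add_one {k : ℕ} (hk : k ≤ m) :
    X 1 ^ (m - k) * zm (2 * k + 2) ∈ Jm (2 * m + 1) := by
  obtain rfl | hlt := hk.eq_or_lt
  · simpa using zm_add_one_mem_Jm (2 * k + 1)
  · rw [pow_sub_eq_mul_pow_sub_succ _ hlt, mul_assoc]
    exact span_X_one_mul_Jm_le _ (Ideal.mul_mem_mul (Ideal.mem_span_singleton_self _)
      (X_one_pow_sub_mul_mem_Jm hlt (zm_mem_Jm _)))

theorem mul_zm_two_mul_add_three (f : MvPolynomial (Fin 2) ℂ) (k : ℕ) :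
    f * zm (2 * (k + 1) + 1) = X 0 * (f * zm (2 * (k + 1))) +
      C (2 * (2 * (k : ℂ) + 2) * (2 * k + 1)) * (X 1 * f * zm (2 * k)) := by
  rw [mul_add_one, zm_add_three, ← mul_add_one, zmCoeff_even, C_0]
  push_cast
  ring

theorem mul_zm_two_mul_add_four (f : MvPolynomial (Fin 2) ℂ) (k : ℕ) :
    f * zm (2 * (k + 1) + 2) = X 0 * (f * zm (2 * (k + 1) + 1)) -
      C (16 * (2 * ((k : ℂ) + 1) + 1) ^ 2) * (f * zm (2 * (k + 1))) +
      C (2 * (2 * (k : ℂ) + 3) * (2 * k + 2)) * (X 1 * f * zm (2 * k + 1)) := by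
  rw [show 2 * (k + 1) + 2 = 2 * k + 1 + 3 by lia, zm_add_three,
    show 2 * k + 1 + 2 = 2 * (k + 1) + 1 by lia, zmCoeff_odd]
  push_cast
  ring_nf

theorem dual_C_mul {σ K : Type*} [CommSemiring K] (φ : Module.Dual K (MvPolynomial σ K)) (c : K)
    (f : MvPolynomial σ K) : φ (C c * f) = c * φ f := by
  rw [← smul_eq_C_mul, map_smul, smul_eq_mul]

variable {φ : Module.Dual ℂ (MvPolynomial (Fin 2) ℂ)} {l : ℂ}

theorem dual_X_one_pow_mul_zm_odd (hφα : ∀ f ∈ Jm (2 * m), φ (X 0 * f) = l * φ f) {k : ℕ}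
    (hk : k < m) :
    φ (X 1 ^ (m - (k + 1)) * zm (2 * (k + 1) + 1)) =
      l * φ (X 1 ^ (m - (k + 1)) * zm (2 * (k + 1))) +
        2 * (2 * k + 2) * (2 * k + 1) * φ (X 1 ^ (m - k) * zm (2 * k)) := by
  rw [mul_zm_two_mul_add_three, map_add, dual_C_mul, ← pow_sub_eq_mul_pow_sub_succ _ hk,
    hφα _ (X_one_pow_sub_mul_mem_Jm hk (zm_mem_Jm _))]

theorem mul_dual_X_one_pow_mul_zm_odd (hφα : ∀ f ∈ Jm (2 * m), φ (X 0 * f) = l * φ f)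
    (hφ : ∀ f ∈ Jm (2 * m + 1), φ f = 0) {k : ℕ} (hk : k < m) :
    l * φ (X 1 ^ (m - (k + 1)) * zm (2 * (k + 1) + 1)) =
      16 * (2 * (k + 1) + 1) ^ 2 * φ (X 1 ^ (m - (k + 1)) * zm (2 * (k + 1))) -
        2 * (2 * k + 3) * (2 * k + 2) * φ (X 1 ^ (m - k) * zm (2 * k + 1)) := by
  have hzero := hφ _ (X_one_pow_mul_zm_mem_Jm_two_mul_add_one hk)
  rw [mul_zm_two_mul_add_four, map_add, map_sub, dual_C_mul, dual_C_mul,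
    ← pow_sub_eq_mul_pow_sub_succ _ hk,
    hφα _ (X_one_pow_sub_mul_mem_Jm hk (zm_add_one_mem_Jm _))] at hzero
  linear_combination hzero

theorem mul_dual_X_one_pow_mul_zm_one (hφα : ∀ f ∈ Jm (2 * m), φ (X 0 * f) = l * φ f)
    (hφ : ∀ f ∈ Jm (2 * m + 1), φ f = 0) :
    l * φ (X 1 ^ m * zm 1) = 16 * φ (X 1 ^ m * zm 0) := by
  have hα : φ (X 0 * (X 1 ^ m * zm 1)) = l * φ (X 1 ^ m * zm 1) :=
    hφα _ (by simpa using X_one_pow_mul_mem_Jm m (zm_add_one_mem_Jm (2 * 0)))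
  have hzero : φ (X 1 ^ m * zm 2) = 0 :=
    hφ _ (by simpa using X_one_pow_mul_zm_mem_Jm_two_mul_add_one m.zero_le)
  have heq : X 1 ^ m * zm 2 = X 0 * (X 1 ^ m * zm 1) - C 16 * (X 1 ^ m * zm 0) := by
    simp only [zm]
    ring
  rw [heq, map_sub, dual_C_mul, hα] at hzero
  linear_combination hzero

theorem dual_zm_two_mul_eq_zero (hφα : ∀ f ∈ Jm (2 * m), φ (X 0 * f) = l * φ f)
    (hφ : ∀ f ∈ Jm (2 * m + 1), φ f = 0) : φ (zm (2 * m)) = 0 := by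
  let x (k : ℕ) : ℂ := φ (X 1 ^ (m - k) * zm (2 * k))
  let y (k : ℕ) : ℂ := φ (X 1 ^ (m - k) * zm (2 * k + 1))
  have hb : StrictMono fun k : ℕ ↦ 16 * (2 * (k : ℝ) + 1) ^ 2 := by
    intro j k hjk
    dsimp only
    gcongr
  suffices x m = 0 by simpa [x] using this
  refine eq_zero_of_recurrence (l := l) (y := y) hb
    (c := fun k ↦ 2 * (2 * k + 2) * (2 * k + 1)) (d := fun k ↦ 2 * (2 * k + 3) * (2 * k + 2))
    (by norm_num) (fun k ↦ by positivity) (fun k ↦ by positivity) ?_ ?_ (fun k hk ↦ ?_)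
    (fun k hk ↦ ?_) ?_
  · rw [← hφα _ (X_one_pow_sub_mul_mem_Jm m.zero_le (zm_mem_Jm 0))]
    simp [y, zm, mul_comm]
  · simpa [x, y] using mul_dual_X_one_pow_mul_zm_one hφα hφ
  · simpa [x, y] using dual_X_one_pow_mul_zm_odd hφα hk
  · simpa [x, y] using mul_dual_X_one_pow_mul_zm_odd hφα hφ hk
  · simpa [y] using hφ _ (zm_mem_Jm _)

theorem zm_two_mul_mem_Jm (m : ℕ) : zm (2 * m) ∈ Jm (2 * m + 1) := by
  by_contra hnotMem
  obtain ⟨a, φ, hφz, hφ, hmul⟩ := exists_dual_mul_eq_eval_mul hnotMem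
  have hle : Jm (2 * m) ≤ Jm (2 * m + 1) ⊔ Ideal.span {zm (2 * m)} :=
    Jm_le_iff.2 ⟨Ideal.mem_sup_right (Ideal.mem_span_singleton_self _),
      Ideal.mem_sup_left (zm_mem_Jm _), Ideal.mem_sup_left (zm_add_one_mem_Jm _)⟩
  have hφα (f : MvPolynomial (Fin 2) ℂ) (hf : f ∈ Jm (2 * m)) : φ (X 0 * f) = a 0 * φ f := by
    rw [hmul f (hle hf), eval_X]
  exact one_ne_zero (hφz.symm.trans (dual_zm_two_mul_eq_zero hφα hφ))

theorem Jm_two_mul_add_one (m : ℕ) : Jm (2 * m + 1) = Jm (2 * m) :=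
  le_antisymm (Jm_succ_le _)
    (Jm_le_iff.2 ⟨zm_two_mul_mem_Jm m, zm_mem_Jm _, zm_add_one_mem_Jm _⟩)

theorem Jm_eq_Jm_two_mul_div_two (g : ℕ) : Jm g = Jm (2 * (g / 2)) := by
  obtain ⟨m, rfl | rfl⟩ := g.even_or_odd'
  · rw [Nat.mul_div_cancel_left m two_pos]
  · rw [Jm_two_mul_add_one, Nat.mul_add_div two_pos, Nat.div_eq_of_lt one_lt_two, add_zero]

end Odd

section Count

theorem sum_range_add_one_eq (m : ℕ) : ∑ n ∈ Finset.range m, (n + 1) = m * (m + 1) / 2 := by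
  simpa [Finset.sum_range_succ', mul_comm] using Finset.sum_range_id (m + 1)

theorem ncard_weightLT_inter_parityClass (m : ℕ) {r : ℕ} (hr : r < 2) :
    (weightLT (2 * m) ∩ parityClass r).ncard = m * (m + 1) / 2 := by
  -- The pair `⟨n, i⟩` stands for the unique `(j, i)` of parity `r` with `j / 2 + i = n`.
  let exponents (p : (_ : ℕ) × ℕ) : ℕ × ℕ := (2 * (p.1 - p.2) + (r + p.2) % 2, p.2)
  let triangle := (Finset.range m).sigma fun n ↦ Finset.range (n + 1)
  have himage : weightLT (2 * m) ∩ parityClass r = exponents '' triangle := by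
    ext ⟨j, i⟩
    simp only [weightLT, parityClass, triangle, exponents, Set.mem_inter_iff, Set.mem_ofPred_eq,
      Set.mem_image, Finset.mem_coe, Finset.mem_sigma, Finset.mem_range, Prod.mk.injEq,
      Sigma.exists]
    constructor
    · rintro ⟨hlt, hpar⟩
      exact ⟨j / 2 + i, i, by lia⟩
    · rintro ⟨n, _, ⟨hn, hi⟩, rfl, rfl⟩
      omega
  have hinj : Set.InjOn exponents triangle := by
    rintro ⟨n, i⟩ hn ⟨n', i'⟩ hn' heq
    simp only [triangle, exponents, Finset.mem_coe, Finset.mem_sigma, Finset.mem_range,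
      Prod.mk.injEq] at hn hn' heq
    obtain ⟨hj, rfl⟩ := heq
    obtain rfl : n = n' := by lia
    rfl
  rw [himage, hinj.ncard_image, Set.ncard_coe_finset, Finset.card_sigma]
  simpa using sum_range_add_one_eq m

end Count

theorem quotientMonomialSpan_parityClass_eq_span {K : Type*} [CommRing K]
    (J : Ideal (MvPolynomial (Fin 2) K)) (r : ℕ) :
    quotientMonomialSpan K J (parityClass r) =
      Submodule.span K {q | ∃ i j : ℕ, (i + j) % 2 = r ∧
        q = Ideal.Quotient.mk J (X 0 ^ j * X 1 ^ i)} := by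
  rw [quotientMonomialSpan, monomialSpan, Submodule.map_span, Set.image_image]
  congr 1
  ext q
  simp only [Set.mem_image, Set.mem_ofPred_eq, Prod.exists, monomialBasis_apply, parityClass]
  rw [exists_comm]
  simp [eq_comm (a := q)]

theorem Em_eq_quotientMonomialSpan (g : ℕ) :
    Em g = quotientMonomialSpan ℂ (Jm g) (parityClass 0) :=
  (quotientMonomialSpan_parityClass_eq_span (Jm g) 0).symm

theorem Om_eq_quotientMonomialSpan (g : ℕ) :
    Om g = quotientMonomialSpan ℂ (Jm g) (parityClass 1) :=
  (quotientMonomialSpan_parityClass_eq_span (Jm g) 1).symm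

theorem isCompl_monomialSpan_weightLT_Jm (g : ℕ) :
    IsCompl (monomialSpan ℂ (weightLT (2 * (g / 2)))) ((Jm g).restrictScalars ℂ) := by
  rw [Jm_eq_Jm_two_mul_div_two g]
  exact isCompl_monomialSpan_weightLT_Jm_two_mul (g / 2)

theorem finrank_quotientMonomialSpan_Jm_parityClass (g : ℕ) {r : ℕ} (hr : r < 2) :
    Module.finrank ℂ (quotientMonomialSpan ℂ (Jm g) (parityClass r)) =
      g / 2 * (g / 2 + 1) / 2 := by
  have hcompl := isCompl_monomialSpan_weightLT_Jm g
  rw [← quotientMonomialSpan_inter_parityClass two_ne_zero.isUnit (Jm_le_comap_negVars g)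
      hcompl.codisjoint hr,
    finrank_quotientMonomialSpan
      (hcompl.disjoint.mono_left (monomialSpan_mono Set.inter_subset_left)),
    ncard_weightLT_inter_parityClass (g / 2) hr]

/-- ℂ[α,γ]/J_g^- = E ⊕ O, with dim E = dim O = ½⌊g/2⌋(⌊g/2⌋+1). -/
theorem Jm_even_odd_decomposition (g : ℕ) :
    Em g ⊓ Om g = ⊥ ∧ Em g ⊔ Om g = ⊤ ∧
    Module.finrank ℂ (Em g) = (g / 2) * (g / 2 + 1) / 2 ∧
    Module.finrank ℂ (Om g) = (g / 2) * (g / 2 + 1) / 2 := by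
  rw [Em_eq_quotientMonomialSpan, Om_eq_quotientMonomialSpan]
  have hdisj := disjoint_quotientMonomialSpan_parityClass two_ne_zero.isUnit
    (Jm_le_comap_negVars g)
  exact ⟨hdisj.eq_bot, codisjoint_quotientMonomialSpan_parityClass.eq_top,
    finrank_quotientMonomialSpan_Jm_parityClass g two_pos,
    finrank_quotientMonomialSpan_Jm_parityClass g one_lt_two⟩
end

section
/- Let g ≥ 2 be even and u ∈ ℂ[α,γ]. If γ²·u ∈ J_g^+, then u ∈ J_{g−4}^+ (where for negative indices m we set J_m^+ to be the ideal generated by ζ_m^+, ζ_{m+1}^+, ζ_{m+2}^+ with the convention ζ_k^+ = 0 for k < 0 and ζ_0^+ = 1, so J_m^+ is the unit ideal for m ≤ 0). -/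
open MvPolynomial

/-- ζ_k^+ ∈ ℂ[α,γ] (variables: X 0 = α, X 1 = γ):
    ζ_{k+1}^+ = α ζ_k^+ + 16k² ζ_{k−1}^+ + 2k(k−1) γ ζ_{k−2}^+ for k even, and
    ζ_{k+1}^+ = α ζ_k^+ + 2k(k−1) γ ζ_{k−2}^+ for k odd. -/
noncomputable def zp : ℕ → MvPolynomial (Fin 2) ℂ
  | 0 => 1
  | 1 => X 0
  | 2 => X 0 * zp 1
  | (n + 3) =>
      if n % 2 = 0 then
        X 0 * zp (n + 2) + C (16 * ((n : ℂ) + 2) ^ 2) * zp (n + 1)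
          + C (2 * ((n : ℂ) + 2) * ((n : ℂ) + 1)) * X 1 * zp n
      else
        X 0 * zp (n + 2) + C (2 * ((n : ℂ) + 2) * ((n : ℂ) + 1)) * X 1 * zp n

/-- ζ_k^+ for an integer index k, with ζ_k^+ = 0 for k < 0. -/
noncomputable def zpZ (k : ℤ) : MvPolynomial (Fin 2) ℂ :=
  if k < 0 then 0 else zp k.toNat

/-- J_g^+ = (ζ_g^+, ζ_{g+1}^+, ζ_{g+2}^+) ⊆ ℂ[α,γ], for a natural number g. -/
noncomputable def Jp (g : ℕ) : Ideal (MvPolynomial (Fin 2) ℂ) :=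
  Ideal.span {zp g, zp (g + 1), zp (g + 2)}

/-- J_m^+ for an integer index m (the unit ideal for m ≤ 0, since ζ_0^+ = 1). -/
noncomputable def JpZ (m : ℤ) : Ideal (MvPolynomial (Fin 2) ℂ) :=
  Ideal.span {zpZ m, zpZ (m + 1), zpZ (m + 2)}

/-!
Write `e j = ζ_{2j} / (2j)!` and `o j = ζ_{2j-1} / (2j-1)!`, so that `J_{2j}` is generated by `e j`,
`o (j + 1)`, `e (j + 1)`, and suppose `γ² u ∈ J_{2j+4}`. After using the recursion to put the
generators of `J_{2j+4}` into the form `f w + γ v`, `c w + γ v'`, `γ z` with `c` a nonzero constant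
and `w = o (j + 2)` prime to `γ`, one can divide by `γ` once; the resulting ideal has generators of
the same form with `w = o (j + 1)`, and a second division shows `u ∈ J_{2j} + (α o j)`.

It remains to see that `α o j ∈ J_{2j}`. Modulo `J_{2j}`, running the recursion downwards from `j`
gives, for either square root `s` of `-1`, that `(-2γ)^j e 0 = ∏_{1 ≤ k ≤ j} (α - 8 s k) * 4 s o j`,
while `(-2γ)^j α e 0 = (-2γ)^j o 1 = 0`. Hence `α o j` is killed by the products for `s` and for
`-s`, and these are coprime because the numbers `8 s k` and `-8 s l` with `k, l ≥ 1` are distinct.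
-/

section General

theorem isUnit_natCast_of_ne_zero {A : Type*} [Ring A] [Algebra ℚ A] {n : ℕ} (hn : n ≠ 0) :
    IsUnit (n : A) := by
  simpa using (Nat.cast_ne_zero.mpr hn : (n : ℚ) ≠ 0).isUnit.map (algebraMap ℚ A)

theorem isCoprime_sub_sub_of_isUnit_sub {A : Type*} [CommRing A] (x : A) {a b : A}
    (h : IsUnit (a - b)) : IsCoprime (x - a) (x - b) := by
  simpa using (Polynomial.isCoprime_X_sub_C_of_isUnit_sub h).map (Polynomial.evalRingHom x)

theorem isCoprime_prod_sub_prod_add {A : Type*} [CommRing A] [Algebra ℚ A] (x : A) {t : A}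
    (ht : IsUnit t) (m n : ℕ) :
    IsCoprime (∏ k ∈ Finset.Ioc 0 m, (x - t * k)) (∏ k ∈ Finset.Ioc 0 n, (x + t * k)) := by
  refine IsCoprime.prod_left fun k hk ↦ IsCoprime.prod_right fun l _ ↦ ?_
  have hkl : k + l ≠ 0 := by have := Finset.mem_Ioc.mp hk; omega
  rw [← sub_neg_eq_add]
  apply isCoprime_sub_sub_of_isUnit_sub
  convert ht.mul (isUnit_natCast_of_ne_zero (A := A) hkl) using 1
  push_cast
  ring

theorem isUnit_of_mul_self_eq_neg_one {A : Type*} [CommRing A] {s : A} (hs : s * s = -1) :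
    IsUnit s :=
  .of_mul_eq_one (-s) (by rw [mul_neg, hs, neg_neg])

theorem span_triple_le {A : Type*} [CommRing A] {I : Ideal A} {x y z : A} (hx : x ∈ I)
    (hy : y ∈ I) (hz : z ∈ I) : Ideal.span {x, y, z} ≤ I := by
  simp [Ideal.span_le, Set.insert_subset_iff, hx, hy, hz]

theorem mem_span_of_prime_mul_mem_span {R : Type*} [CommRing R] [IsDomain R]
    {p w f c v v' z u : R} (hp : Prime p) (hw : ¬ p ∣ w) (hc : IsUnit c)
    (h : p * u ∈ Ideal.span {f * w + p * v, c * w + p * v', p * z}) :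
    u ∈ Ideal.span {c * v - f * v', c * w + p * v', z} := by
  obtain ⟨a, b, d, hu⟩ := Submodule.mem_span_triple.mp h
  simp only [smul_eq_mul] at hu
  have hdvd : p ∣ (a * f + b * c) * w :=
    ⟨u - a * v - b * v' - d * z, by linear_combination hu⟩
  obtain ⟨s, hs⟩ := (hp.dvd_or_dvd hdvd).resolve_right hw
  rw [← Ideal.unit_mul_mem_iff_mem _ hc]
  refine Submodule.mem_span_triple.mpr ⟨a, s, c * d, mul_left_cancel₀ hp.ne_zero ?_⟩
  simp only [smul_eq_mul]
  linear_combination c * hu - (c * w + p * v') * hs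

end General

/-- The recursion satisfied by the normalized even and odd terms `e j = ζ_{2j} / (2j)!` and
`o j = ζ_{2j-1} / (2j-1)!`, over an arbitrary ring. The odd terms are shifted by one so that
`o 0` stands for `ζ_{-1} = 0`. -/
structure IsZetaPair {A : Type*} [CommRing A] (α γ : A) (e o : ℕ → A) : Prop where
  odd_zero : o 0 = 0
  odd_one : o 1 = α * e 0
  even_succ (j : ℕ) : (2 * j + 2) * e (j + 1) = α * o (j + 1) + 2 * γ * o j
  odd_add_two (j : ℕ) :
    (2 * j + 3) * o (j + 2) = α * e (j + 1) + 32 * (j + 1) * o (j + 1) + 2 * γ * e j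

/-- The analogue of `J_{2j}` for a pair of sequences as in `IsZetaPair`. -/
def evenIdeal {A : Type*} [CommRing A] (e o : ℕ → A) (j : ℕ) : Ideal A :=
  Ideal.span {e j, o (j + 1), e (j + 1)}

/-- Generators of the colon ideal `J_{2j+4} : γ`, for a pair of sequences as in `IsZetaPair`. -/
def evenColonIdeal {A : Type*} [CommRing A] (α γ : A) (e o : ℕ → A) (j : ℕ) : Ideal A :=
  Ideal.span {α * e (j + 1) - 32 * (j + 2) * o (j + 1), o (j + 2), γ * e (j + 1)}

section EvenIdeal

variable {A : Type*} [CommRing A] (e o : ℕ → A) (j : ℕ)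

theorem even_mem_evenIdeal : e j ∈ evenIdeal e o j :=
  Ideal.subset_span (by simp)

theorem odd_succ_mem_evenIdeal : o (j + 1) ∈ evenIdeal e o j :=
  Ideal.subset_span (by simp)

theorem even_succ_mem_evenIdeal : e (j + 1) ∈ evenIdeal e o j :=
  Ideal.subset_span (by simp)

theorem map_evenIdeal {B : Type*} [CommRing B] (φ : A →+* B) :
    (evenIdeal e o j).map φ = evenIdeal (φ ∘ e) (φ ∘ o) j := by
  simp [evenIdeal, Ideal.map_span, Set.image_insert_eq]

end EvenIdeal

namespace IsZetaPair

variable {A : Type*} [CommRing A] {α γ : A} {e o : ℕ → A}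

theorem map {B : Type*} [CommRing B] (h : IsZetaPair α γ e o) (φ : A →+* B) :
    IsZetaPair (φ α) (φ γ) (φ ∘ e) (φ ∘ o) where
  odd_zero := by simp [h.odd_zero]
  odd_one := by simp [h.odd_one]
  even_succ j := by simpa [map_ofNat] using congrArg φ (h.even_succ j)
  odd_add_two j := by simpa [map_ofNat] using congrArg φ (h.odd_add_two j)

section Vanishing

variable {M : ℕ}

theorem pow_mul_eq_zero_of_evenIdeal_eq_bot (h : IsZetaPair α γ e o) (hM : evenIdeal e o M = ⊥)
    {j : ℕ} (hj : j ≤ M) :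
    (-2 * γ) ^ (M - j + 1) * e j = 0 ∧ (-2 * γ) ^ (M - j + 1) * o j = 0 ∧
      (-2 * γ) ^ (M - j) * o (j + 1) = 0 := by
  induction hj using Nat.decreasingInduction with
  | self =>
    have even_eq : e M = 0 := by simpa [hM] using even_mem_evenIdeal e o M
    have odd_succ_eq : o (M + 1) = 0 := by simpa [hM] using odd_succ_mem_evenIdeal e o M
    have even_succ_eq : e (M + 1) = 0 := by simpa [hM] using even_succ_mem_evenIdeal e o M
    have hγ : 2 * γ * o M = 0 := by simpa [odd_succ_eq, even_succ_eq] using (h.even_succ M).symm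
    simp [even_eq, odd_succ_eq, hγ]
  | of_succ j hj ih =>
    obtain ⟨even_eq, odd_eq, odd_succ_eq⟩ := ih
    rw [pow_succ] at even_eq odd_eq
    rw [show M - j = M - (j + 1) + 1 by omega, pow_succ, pow_succ]
    refine ⟨?_, ?_, odd_eq⟩
    · linear_combination α * even_eq + 32 * (j + 1) * odd_eq
        - (2 * j + 3) * (-2 * γ) * odd_succ_eq
        + (-2 * γ) ^ (M - (j + 1)) * (-2 * γ) * h.odd_add_two j
    · linear_combination α * odd_eq - (2 * j + 2) * even_eq
        + (-2 * γ) ^ (M - (j + 1)) * (-2 * γ) * h.even_succ j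

theorem pow_mul_even_add_odd_of_evenIdeal_eq_bot (h : IsZetaPair α γ e o)
    (hM : evenIdeal e o M = ⊥) {s : A} (hs : s * s = -1) {j : ℕ} (hj : j ≤ M) :
    (-2 * γ) ^ (M - j) * (e j + 4 * s * o j) =
      (∏ k ∈ Finset.Ioc j M, (α - 8 * s * k)) * (4 * s * o M) := by
  induction hj using Nat.decreasingInduction with
  | self =>
    have even_eq : e M = 0 := by simpa [hM] using even_mem_evenIdeal e o M
    simp [even_eq]
  | of_succ j hj ih =>
    obtain ⟨-, -, odd_succ_eq⟩ := h.pow_mul_eq_zero_of_evenIdeal_eq_bot hM hj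
    rw [← Finset.insert_Ioc_succ_left_eq_Ioc hj, Finset.prod_insert (by simp),
      Nat.succ_eq_succ, Nat.succ_eq_add_one, show M - j = M - (j + 1) + 1 by omega, pow_succ]
    push_cast
    linear_combination (α - 8 * s * (j + 1)) * ih
      + (-2 * γ) ^ (M - (j + 1)) * (h.odd_add_two j + 4 * s * h.even_succ j)
      - (2 * j + 3) * odd_succ_eq
      + 32 * (-2 * γ) ^ (M - (j + 1)) * (j + 1) * o (j + 1) * hs

variable [Algebra ℚ A]

theorem prod_mul_alpha_mul_odd_of_evenIdeal_eq_bot (h : IsZetaPair α γ e o)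
    (hM : evenIdeal e o M = ⊥) {s : A} (hs : s * s = -1) :
    (∏ k ∈ Finset.Ioc 0 M, (α - 8 * s * k)) * (α * o M) = 0 := by
  obtain ⟨-, -, odd_one_eq⟩ := h.pow_mul_eq_zero_of_evenIdeal_eq_bot hM M.zero_le
  have even_zero_eq := h.pow_mul_even_add_odd_of_evenIdeal_eq_bot hM hs M.zero_le
  have four_isUnit : IsUnit (4 : A) := mod_cast isUnit_natCast_of_ne_zero four_ne_zero
  rw [zero_add, h.odd_one] at odd_one_eq
  rw [h.odd_zero] at even_zero_eq
  rw [← (four_isUnit.mul (isUnit_of_mul_self_eq_neg_one hs)).mul_right_eq_zero]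
  linear_combination odd_one_eq - α * even_zero_eq

theorem alpha_mul_odd_eq_zero_of_evenIdeal_eq_bot (h : IsZetaPair α γ e o)
    (hM : evenIdeal e o M = ⊥) {s : A} (hs : s * s = -1) : α * o M = 0 := by
  have eight_isUnit : IsUnit (8 : A) := mod_cast isUnit_natCast_of_ne_zero (Nat.succ_ne_zero 7)
  obtain ⟨a, b, hab⟩ := isCoprime_prod_sub_prod_add α
    (eight_isUnit.mul (isUnit_of_mul_self_eq_neg_one hs)) M M
  have hpos := h.prod_mul_alpha_mul_odd_of_evenIdeal_eq_bot hM hs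
  have hneg : (∏ k ∈ Finset.Ioc 0 M, (α + 8 * s * k)) * (α * o M) = 0 := by
    simpa using h.prod_mul_alpha_mul_odd_of_evenIdeal_eq_bot hM (s := -s) (by simpa using hs)
  linear_combination a * hpos + b * hneg - (α * o M) * hab

end Vanishing

variable [Algebra ℚ A]

theorem alpha_mul_odd_mem_evenIdeal (h : IsZetaPair α γ e o) {s : A} (hs : s * s = -1) (j : ℕ) :
    α * o j ∈ evenIdeal e o j := by
  set φ := Ideal.Quotient.mk (evenIdeal e o j)
  have hbot : evenIdeal (φ ∘ e) (φ ∘ o) j = ⊥ := by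
    rw [← map_evenIdeal, Ideal.map_quotient_self]
  have hφs : φ s * φ s = -1 := by rw [← map_mul, hs, map_neg, map_one]
  rw [← Ideal.Quotient.eq_zero_iff_mem, map_mul]
  exact (h.map φ).alpha_mul_odd_eq_zero_of_evenIdeal_eq_bot hbot hφs

theorem evenIdeal_add_two_le (h : IsZetaPair α γ e o) (j : ℕ) :
    evenIdeal e o (j + 2) ≤ Ideal.span {α * o (j + 2) + γ * (2 * o (j + 1)),
      32 * (j + 2) * o (j + 2) + γ * (2 * e (j + 1)), γ * (2 * o (j + 2))} := by
  set I : Ideal A := Ideal.span _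
  have even_mem : e (j + 2) ∈ I := by
    have hc : IsUnit (2 * (j + 1) + 2 : A) :=
      mod_cast isUnit_natCast_of_ne_zero (A := A) (2 * (j + 1) + 1).succ_ne_zero
    have hrec := h.even_succ (j + 1)
    push_cast at hrec
    rw [← Ideal.unit_mul_mem_iff_mem I hc, hrec, mul_assoc, mul_left_comm 2]
    exact Ideal.subset_span (by simp)
  have odd_mem : o (j + 3) ∈ I := by
    have hc : IsUnit (2 * (j + 1) + 3 : A) :=
      mod_cast isUnit_natCast_of_ne_zero (A := A) (2 * (j + 1) + 2).succ_ne_zero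
    have hrec : (2 * (j + 1) + 3) * o (j + 3)
        = α * e (j + 2) + (32 * (j + 2) * o (j + 2) + γ * (2 * e (j + 1))) := by
      have := h.odd_add_two (j + 1)
      push_cast at this
      linear_combination this
    rw [← Ideal.unit_mul_mem_iff_mem I hc, hrec]
    exact I.add_mem (I.mul_mem_left _ even_mem) (Ideal.subset_span (by simp))
  have even_succ_mem : e (j + 3) ∈ I := by
    have hc : IsUnit (2 * (j + 2) + 2 : A) :=
      mod_cast isUnit_natCast_of_ne_zero (A := A) (2 * (j + 2) + 1).succ_ne_zero
    have hrec := h.even_succ (j + 2)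
    push_cast at hrec
    rw [← Ideal.unit_mul_mem_iff_mem I hc, hrec, mul_assoc, mul_left_comm 2]
    exact I.add_mem (I.mul_mem_left _ odd_mem) (Ideal.subset_span (by simp))
  exact span_triple_le even_mem odd_mem even_succ_mem

theorem evenColonIdeal_le (h : IsZetaPair α γ e o) (j : ℕ) :
    evenColonIdeal α γ e o j ≤
      Ideal.span {(α ^ 2 - 64 * (j + 1) * (j + 2)) * o (j + 1) + γ * (2 * α * o j),
        32 * (2 * j + 3) * o (j + 1) + γ * (2 * e j), γ * e (j + 1)} := by
  set I : Ideal A := Ideal.span _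
  have diff_mem : α * e (j + 1) - 32 * (j + 2) * o (j + 1) ∈ I := by
    have hc : IsUnit (2 * j + 2 : A) :=
      mod_cast isUnit_natCast_of_ne_zero (A := A) (2 * j + 1).succ_ne_zero
    rw [← Ideal.unit_mul_mem_iff_mem I hc]
    refine Ideal.subset_span (Or.inl ?_)
    linear_combination α * h.even_succ j
  have odd_mem : o (j + 2) ∈ I := by
    have hc : IsUnit (2 * j + 3 : A) :=
      mod_cast isUnit_natCast_of_ne_zero (A := A) (2 * j + 2).succ_ne_zero
    have hrec : (2 * j + 3) * o (j + 2) = (α * e (j + 1) - 32 * (j + 2) * o (j + 1))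
        + (32 * (2 * j + 3) * o (j + 1) + γ * (2 * e j)) := by
      linear_combination h.odd_add_two j
    rw [← Ideal.unit_mul_mem_iff_mem I hc, hrec]
    exact I.add_mem diff_mem (Ideal.subset_span (by simp))
  exact span_triple_le diff_mem odd_mem (Ideal.subset_span (by simp))

variable [IsDomain A] {j : ℕ} {u : A}

theorem mem_evenColonIdeal_of_gamma_mul_mem (h : IsZetaPair α γ e o) (hγ : Prime γ)
    (hodd : ¬ γ ∣ o (j + 2)) (hu : γ * u ∈ evenIdeal e o (j + 2)) :
    u ∈ evenColonIdeal α γ e o j := by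
  have hc : IsUnit (32 * (j + 2) : A) :=
    mod_cast isUnit_natCast_of_ne_zero (A := A) (n := 32 * (j + 2)) (by omega)
  have diff_mem : α * e (j + 1) - 32 * (j + 2) * o (j + 1) ∈ evenColonIdeal α γ e o j :=
    Ideal.subset_span (by simp)
  have odd_mem : o (j + 2) ∈ evenColonIdeal α γ e o j := Ideal.subset_span (by simp)
  have even_mem : γ * e (j + 1) ∈ evenColonIdeal α γ e o j := Ideal.subset_span (by simp)
  refine span_triple_le ?_ ?_ (Ideal.mul_mem_left _ 2 odd_mem)
    (mem_span_of_prime_mul_mem_span hγ hodd hc (h.evenIdeal_add_two_le j hu))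
  · convert Ideal.mul_mem_left _ (-2) diff_mem using 1
    ring
  · rw [mul_left_comm γ]
    exact Ideal.add_mem _ (Ideal.mul_mem_left _ _ odd_mem) (Ideal.mul_mem_left _ _ even_mem)

theorem mem_evenIdeal_of_gamma_mul_mem_evenColonIdeal (h : IsZetaPair α γ e o) (hγ : Prime γ)
    (hodd : ¬ γ ∣ o (j + 1)) {s : A} (hs : s * s = -1)
    (hu : γ * u ∈ evenColonIdeal α γ e o j) : u ∈ evenIdeal e o j := by
  have hc : IsUnit (32 * (2 * j + 3) : A) :=
    mod_cast isUnit_natCast_of_ne_zero (A := A) (n := 32 * (2 * j + 3)) (by omega)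
  have alpha_mul_odd_mem := h.alpha_mul_odd_mem_evenIdeal hs j
  have even_mem := even_mem_evenIdeal e o j
  refine span_triple_le (Ideal.sub_mem _ ?_ ?_) (Ideal.add_mem _ ?_ ?_)
    (even_succ_mem_evenIdeal e o j)
    (mem_span_of_prime_mul_mem_span hγ hodd hc (h.evenColonIdeal_le j hu))
  · rw [mul_assoc 2]
    exact Ideal.mul_mem_left _ _ (Ideal.mul_mem_left _ _ alpha_mul_odd_mem)
  · exact Ideal.mul_mem_left _ _ (Ideal.mul_mem_left _ _ even_mem)
  · exact Ideal.mul_mem_left _ _ (odd_succ_mem_evenIdeal e o j)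
  · exact Ideal.mul_mem_left _ _ (Ideal.mul_mem_left _ _ even_mem)

theorem mem_evenIdeal_of_gamma_sq_mul_mem (h : IsZetaPair α γ e o) (hγ : Prime γ)
    (hodd : ∀ k, ¬ γ ∣ o (k + 1)) {s : A} (hs : s * s = -1)
    (hu : γ ^ 2 * u ∈ evenIdeal e o (j + 2)) : u ∈ evenIdeal e o j := by
  rw [sq, mul_assoc] at hu
  exact h.mem_evenIdeal_of_gamma_mul_mem_evenColonIdeal hγ (hodd j) hs
    (h.mem_evenColonIdeal_of_gamma_mul_mem hγ (hodd (j + 1)) hu)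

end IsZetaPair

/-- The normalization `ζ_n / n!`, which makes the coefficients of the recursion linear in `n`. -/
noncomputable def zpDivFactorial (n : ℕ) : MvPolynomial (Fin 2) ℂ :=
  C (n.factorial : ℂ)⁻¹ * zp n

theorem factorial_mul_zpDivFactorial (n : ℕ) :
    (n.factorial : MvPolynomial (Fin 2) ℂ) * zpDivFactorial n = zp n := by
  have hn : (n.factorial : ℂ) ≠ 0 := mod_cast n.factorial_ne_zero
  rw [zpDivFactorial, ← mul_assoc, ← map_natCast C, ← C_mul, mul_inv_cancel₀ hn, C_1, one_mul]

theorem zpDivFactorial_add_three (n : ℕ) :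
    (n + 3 : MvPolynomial (Fin 2) ℂ) * zpDivFactorial (n + 3) = X 0 * zpDivFactorial (n + 2)
      + (if n % 2 = 0 then 16 * (n + 2) * zpDivFactorial (n + 1) else 0)
      + 2 * X 1 * zpDivFactorial n := by
  have hn : ((n + 2).factorial : MvPolynomial (Fin 2) ℂ) ≠ 0 :=
    mod_cast (n + 2).factorial_ne_zero
  have hrec : zp (n + 3) = X 0 * zp (n + 2)
      + (if n % 2 = 0 then 16 * (n + 2) ^ 2 * zp (n + 1) else 0)
      + 2 * (n + 2 : MvPolynomial (Fin 2) ℂ) * (n + 1 : MvPolynomial (Fin 2) ℂ) * X 1 * zp n := by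
    rw [zp]
    split_ifs <;> simp [map_ofNat]
  apply mul_left_cancel₀ hn
  simp only [← factorial_mul_zpDivFactorial, Nat.factorial_succ] at hrec ⊢
  push_cast at hrec ⊢
  split_ifs at hrec ⊢ <;> linear_combination hrec

/-- The normalized odd terms `ζ_{2j-1} / (2j-1)!`, with value `0` at `j = 0` because
`ζ_{-1} = 0`. -/
noncomputable def oddZp : ℕ → MvPolynomial (Fin 2) ℂ
  | 0 => 0
  | j + 1 => zpDivFactorial (2 * j + 1)

theorem isZetaPair_zpDivFactorial :
    IsZetaPair (X 0) (X 1) (fun j ↦ zpDivFactorial (2 * j)) oddZp where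
  odd_zero := rfl
  odd_one := by simp [oddZp, zpDivFactorial, zp]
  even_succ
    | 0 => by
      have zp_one : zpDivFactorial 1 = X 0 := by simp [zpDivFactorial, zp]
      have zp_two : 2 * zpDivFactorial 2 = X 0 * X 0 := by
        simpa [zp] using factorial_mul_zpDivFactorial 2
      simpa [oddZp, zp_one] using zp_two
    | j + 1 => by
      have h := zpDivFactorial_add_three (2 * j + 1)
      rw [if_neg (by omega)] at h
      push_cast at h ⊢
      simp only [oddZp]
      linear_combination h
  odd_add_two j := by
    have h := zpDivFactorial_add_three (2 * j)
    rw [if_pos (by omega)] at h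
    push_cast at h
    simp only [oddZp]
    linear_combination h

theorem span_singleton_zp (n : ℕ) : Ideal.span {zp n} = Ideal.span {zpDivFactorial n} := by
  rw [← factorial_mul_zpDivFactorial,
    Ideal.span_singleton_mul_left_unit (isUnit_natCast_of_ne_zero n.factorial_ne_zero)]

theorem Jp_two_mul (j : ℕ) :
    Jp (2 * j) = evenIdeal (fun j ↦ zpDivFactorial (2 * j)) oddZp j := by
  simp only [Jp, evenIdeal, Ideal.span_insert, span_singleton_zp, oddZp, mul_add_one]

open scoped ComplexOrder in
theorem eval_zp_pos (n : ℕ) : 0 < eval ![(1 : ℂ), 0] (zp n) := by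
  induction n using zp.induct with
  | case1 => simp [zp]
  | case2 => simp [zp]
  | case3 => simp [zp]
  | case4 n hn h2 h1 _ =>
    rw [zp, if_pos hn]
    have hpos : 0 < eval ![(1 : ℂ), 0] (zp (n + 2))
        + 16 * ((n : ℂ) + 2) ^ 2 * eval ![(1 : ℂ), 0] (zp (n + 1)) := by positivity
    simpa using hpos
  | case5 n hn h2 _ =>
    rw [zp, if_neg hn]
    simpa

open scoped ComplexOrder in
theorem not_X_one_dvd_zp (n : ℕ) : ¬ (X 1 : MvPolynomial (Fin 2) ℂ) ∣ zp n := by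
  rintro ⟨q, hq⟩
  exact (eval_zp_pos n).ne' (by simp [hq])

theorem not_X_one_dvd_oddZp_succ (j : ℕ) :
    ¬ (X 1 : MvPolynomial (Fin 2) ℂ) ∣ oddZp (j + 1) := by
  intro h
  apply not_X_one_dvd_zp (2 * j + 1)
  rw [← factorial_mul_zpDivFactorial]
  exact h.mul_left _

theorem mem_Jp_of_X_one_sq_mul_mem_Jp {j : ℕ} {u : MvPolynomial (Fin 2) ℂ}
    (h : X 1 ^ 2 * u ∈ Jp (2 * (j + 2))) : u ∈ Jp (2 * j) := by
  have hI : C Complex.I * C Complex.I = (-1 : MvPolynomial (Fin 2) ℂ) := by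
    rw [← C_mul, Complex.I_mul_I, C_neg, C_1]
  rw [Jp_two_mul] at h ⊢
  exact isZetaPair_zpDivFactorial.mem_evenIdeal_of_gamma_sq_mul_mem X_prime
    not_X_one_dvd_oddZp_succ hI h

theorem zpZ_natCast (n : ℕ) : zpZ n = zp n := by
  simp [zpZ]

theorem JpZ_natCast (n : ℕ) : JpZ n = Jp n := by
  simp only [JpZ, Jp, ← zpZ_natCast, Nat.cast_add, Nat.cast_one, Nat.cast_ofNat]

theorem JpZ_neg_two : JpZ (-2) = ⊤ := by
  rw [Ideal.eq_top_iff_one]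
  exact Ideal.subset_span (by simp [zpZ, zp])

/-- For g ≥ 2 even and u ∈ ℂ[α,γ]: if γ²·u ∈ J_g^+ then u ∈ J_{g−4}^+. -/
theorem gamma_sq_mul_mem_Jp (g : ℕ) (hg : 2 ≤ g) (heven : Even g)
    (u : MvPolynomial (Fin 2) ℂ)
    (h : (X 1 : MvPolynomial (Fin 2) ℂ) ^ 2 * u ∈ Jp g) :
    u ∈ JpZ ((g : ℤ) - 4) := by
  obtain ⟨k, rfl⟩ := even_iff_exists_two_mul.mp heven
  obtain rfl | ⟨j, rfl⟩ : k = 1 ∨ ∃ j, k = j + 2 := by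
    rcases k with _ | _ | j
    · omega
    · exact .inl rfl
    · exact .inr ⟨j, rfl⟩
  · have hindex : ((2 * 1 : ℕ) : ℤ) - 4 = -2 := by norm_num
    rw [hindex, JpZ_neg_two]
    exact Submodule.mem_top
  · have hindex : ((2 * (j + 2) : ℕ) : ℤ) - 4 = (2 * j : ℕ) := by push_cast; ring
    rw [hindex, JpZ_natCast]
    exact mem_Jp_of_X_one_sq_mul_mem_Jp h
end
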